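/- There is a universal constant C with the following property. Let Z = (Z_1, …, Z_n) be uniformly distributed on the unit sphere of ℂⁿ (with respect to the standard Hermitian norm). Let B_1, …, B_d be traceless n×n complex Hermitian matrices with tr(B_j B_k) = δ_{jk}, and for j = 1, …, d let X_j = ⟨B_j Z, Z⟩ (a real number since B_j is Hermitian). Let g be a standard Gaussian random vector in ℝ^d. Then W₁( √(n(n+1)) · X , g ) ≤ C · Σ_{j=1}^d ‖B_j‖₄², where ‖B‖₄ = (tr(B⁴))^{1/4} is the Schatten 4-norm of a Hermitian matrix B; in particular this bound implies W₁(√(n(n+1)) X, g) ≤ C Σ_{j=1}^d ‖B_j‖_op, since ‖B_j‖₄² ≤ ‖B_j‖_op when tr(B_j²)=1. -/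

import Mathlib

open MeasureTheory ProbabilityTheory Matrix
open scoped Matrix

universe u

/-- Operator (ℓ²→ℓ²) norm of a complex square matrix. -/
noncomputable def opNormC {n : ℕ} (M : Matrix (Fin n) (Fin n) ℂ) : ℝ :=
  ‖Matrix.toEuclideanCLM (𝕜 := ℂ) M‖

/-
A random vector `X` with a Stein kernel `T`, meaning `E[X_j F(X)] = E[⟨∇F(X), T_j⟩]` for test
functions `F`, satisfies `W₁(X, Y) ≤ (∑ j, E ‖T_j - e_j‖²)^(1/2)` for the standard Gaussian vector
`Y`: differentiate `E h(sin t • X + cos t • Y)` in `t`, integrate by parts against `X` and against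
`Y`, and undo the derivative of `∇h` by one more Gaussian integration by parts.

Write `Q(M) = ⟨M Z, Z⟩`. Differentiating the unitary invariance of the law of `Z` along
`exp (t A)`, and summing over matrix units `A`, gives an integration by parts formula
`n E[u Q(D)] = tr D E[u] + E[Q(D N) - Q(D) Q(N)]`, where the matrix `N` encodes the derivative of
`u` along the orbits. For `u = F(X)` it says that `(Q(B_j B_k) - Q(B_j) Q(B_k)) / n` is a Stein
kernel of `X`; for `u` a power of a form it computes the second and fourth moments that bound the
distance of the rescaled kernel to the identity: its `(j, k)` entry is at squared distance at most
`36 ‖B_j²‖ ‖B_k²‖` in Frobenius norms, and `‖B²‖ = ‖B‖₄²`.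
-/

open scoped ComplexStarModule RealInnerProductSpace

attribute [local instance] LieRing.ofAssociativeRing

section IsBddC1

variable {Ω E E' : Type*} [MeasurableSpace Ω] {P : Measure Ω} [NormedAddCommGroup E]
  [NormedSpace ℝ E] [NormedAddCommGroup E'] [NormedSpace ℝ E'] {F : E → ℝ}

/-- Bounded continuously differentiable functions with bounded derivative, the test functions of
Stein's identities. -/
structure IsBddC1 (F : E → ℝ) : Prop where
  contDiff : ContDiff ℝ 1 F
  exists_abs_le : ∃ C, ∀ x, |F x| ≤ C
  exists_norm_fderiv_le : ∃ C, ∀ x, ‖fderiv ℝ F x‖ ≤ C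

namespace IsBddC1

lemma of_hasCompactSupport (hF : ContDiff ℝ 1 F) (hF_supp : HasCompactSupport F) : IsBddC1 F where
  contDiff := hF
  exists_abs_le := hF_supp.exists_bound_of_continuous hF.continuous
  exists_norm_fderiv_le :=
    (hF_supp.fderiv ℝ).exists_bound_of_continuous (hF.continuous_fderiv one_ne_zero)

lemma continuous (hF : IsBddC1 F) : Continuous F := hF.contDiff.continuous

lemma continuous_fderiv (hF : IsBddC1 F) : Continuous (fderiv ℝ F) :=
  hF.contDiff.continuous_fderiv one_ne_zero

lemma hasFDerivAt (hF : IsBddC1 F) (x : E) : HasFDerivAt F (fderiv ℝ F x) x :=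
  (hF.contDiff.differentiable one_ne_zero x).hasFDerivAt

lemma fderiv_comp_clm (hF : IsBddC1 F) (L : E' →L[ℝ] E) (y : E') :
    fderiv ℝ (fun x ↦ F (L x)) y = (fderiv ℝ F (L y)).comp L :=
  ((hF.hasFDerivAt (L y)).comp y L.hasFDerivAt).fderiv

lemma comp_clm (hF : IsBddC1 F) (L : E' →L[ℝ] E) : IsBddC1 fun y ↦ F (L y) where
  contDiff := hF.contDiff.comp L.contDiff
  exists_abs_le := hF.exists_abs_le.imp fun _ hC _ ↦ hC _
  exists_norm_fderiv_le := by
    obtain ⟨C, hC⟩ := hF.exists_norm_fderiv_le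
    refine ⟨C * ‖L‖, fun y ↦ ?_⟩
    rw [hF.fderiv_comp_clm]
    exact (ContinuousLinearMap.opNorm_comp_le _ _).trans (by gcongr; exact hC _)

lemma fderiv_comp_smul_add_const (hF : IsBddC1 F) (a : ℝ) (b x : E) :
    fderiv ℝ (fun y ↦ F (a • y + b)) x = a • fderiv ℝ F (a • x + b) := by
  have h_affine : HasFDerivAt (fun y : E ↦ a • y + b) (a • ContinuousLinearMap.id ℝ E) x :=
    ((hasFDerivAt_id x).const_smul a).add_const b
  simpa [Function.comp_def] using ((hF.hasFDerivAt (a • x + b)).comp x h_affine).fderiv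

lemma comp_smul_add_const (hF : IsBddC1 F) (a : ℝ) (b : E) : IsBddC1 fun y ↦ F (a • y + b) where
  contDiff := hF.contDiff.comp (by fun_prop)
  exists_abs_le := hF.exists_abs_le.imp fun _ hC _ ↦ hC _
  exists_norm_fderiv_le := by
    obtain ⟨C, hC⟩ := hF.exists_norm_fderiv_le
    refine ⟨|a| * C, fun y ↦ ?_⟩
    rw [hF.fderiv_comp_smul_add_const, norm_smul, Real.norm_eq_abs]
    gcongr
    exact hC _

lemma integrable_mul (hF : IsBddC1 F) {Z : Ω → E} (hZ : AEStronglyMeasurable Z P) {g : Ω → ℝ}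
    (hg : Integrable g P) : Integrable (fun ω ↦ g ω * F (Z ω)) P := by
  obtain ⟨C, hC⟩ := hF.exists_abs_le
  exact hg.mul_bdd (c := C) (hF.continuous.comp_aestronglyMeasurable hZ) (.of_forall fun _ ↦ hC _)

lemma integrable_fderiv_apply (hF : IsBddC1 F) {Z V : Ω → E} (hZ : AEStronglyMeasurable Z P)
    (hV : Integrable V P) : Integrable (fun ω ↦ fderiv ℝ F (Z ω) (V ω)) P := by
  obtain ⟨C, hC⟩ := hF.exists_norm_fderiv_le
  have h_meas := (ContinuousLinearMap.id ℝ (E →L[ℝ] ℝ)).aestronglyMeasurable_comp₂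
    (hF.continuous_fderiv.comp_aestronglyMeasurable hZ) hV.1
  exact (hV.norm.const_mul C).mono' h_meas
    (.of_forall fun ω ↦ (fderiv ℝ F (Z ω)).le_of_opNorm_le (hC _) _)

end IsBddC1

end IsBddC1

section GaussianIntegrationByParts

open Function (update)

lemma hasDerivAt_gaussianPDFReal_zero_one (x : ℝ) :
    HasDerivAt (gaussianPDFReal 0 1) (-(x * gaussianPDFReal 0 1 x)) x := by
  have h_exponent : HasDerivAt (fun y : ℝ ↦ -(y - 0) ^ 2 / (2 * 1)) (-x) x :=
    ((((hasDerivAt_id x).sub_const 0).pow 2).neg.div_const _).congr_deriv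
      (by simp only [id_eq]; ring)
  rw [gaussianPDFReal_def]
  exact (h_exponent.exp.const_mul (√(2 * Real.pi * 1))⁻¹).congr_deriv
    (by simp only [NNReal.coe_one]; ring)

lemma integrable_gaussianReal_zero_one_iff {u : ℝ → ℝ} :
    Integrable u (gaussianReal 0 1) ↔ Integrable fun x ↦ u x * gaussianPDFReal 0 1 x := by
  rw [gaussianReal_of_var_ne_zero 0 one_ne_zero,
    integrable_withDensity_iff (measurable_gaussianPDF 0 1)
      (.of_forall fun _ ↦ gaussianPDF_lt_top)]
  simp only [toReal_gaussianPDF]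

lemma integral_id_mul_gaussianReal_eq_integral_deriv {u u' : ℝ → ℝ}
    (hu : ∀ x, HasDerivAt u (u' x) x) (hu_int : Integrable u (gaussianReal 0 1))
    (hxu_int : Integrable (fun x ↦ x * u x) (gaussianReal 0 1))
    (hu'_int : Integrable u' (gaussianReal 0 1)) :
    ∫ x, x * u x ∂gaussianReal 0 1 = ∫ x, u' x ∂gaussianReal 0 1 := by
  rw [integrable_gaussianReal_zero_one_iff] at hu_int hxu_int hu'_int
  have h_parts := integral_mul_deriv_eq_deriv_mul_of_integrable (fun x _ ↦ hu x)
    (fun x _ ↦ hasDerivAt_gaussianPDFReal_zero_one x)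
    (hxu_int.neg.congr (.of_forall fun x ↦ by simp only [Pi.neg_apply, Pi.mul_apply]; ring))
    hu'_int hu_int
  simp only [integral_gaussianReal_eq_integral_smul one_ne_zero, smul_eq_mul]
  calc ∫ x, gaussianPDFReal 0 1 x * (x * u x)
      = -∫ x, u x * -(x * gaussianPDFReal 0 1 x) := by
        rw [← integral_neg]; congr with x; ring
    _ = ∫ x, gaussianPDFReal 0 1 x * u' x := by
        rw [h_parts, neg_neg]; congr with x; ring

lemma measurePreserving_update {ι : Type*} [Fintype ι] [DecidableEq ι] {α : ι → Type*}
    [∀ i, MeasurableSpace (α i)] (μ : ∀ i, Measure (α i)) [∀ i, IsProbabilityMeasure (μ i)]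
    (i : ι) :
    MeasurePreserving (fun p : (∀ j, α j) × α i ↦ update p.1 i p.2)
      ((Measure.pi μ).prod (μ i)) (Measure.pi μ) := by
  have h_meas : Measurable fun p : (∀ j, α j) × α i ↦ update p.1 i p.2 := measurable_update'
  refine ⟨h_meas, (Measure.pi_eq fun s hs ↦ ?_).symm⟩
  have h_preimage : (fun p : (∀ j, α j) × α i ↦ update p.1 i p.2) ⁻¹' Set.univ.pi s =
      Set.univ.pi (update s i Set.univ) ×ˢ s i := by
    ext p
    simp only [Set.mem_preimage, Set.mem_pi, Set.mem_univ, true_imp_iff, Set.mem_prod]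
    refine ⟨fun h ↦ ⟨fun j ↦ ?_, by simpa using h i⟩, fun h j ↦ ?_⟩
    · rcases eq_or_ne j i with rfl | hj
      · simp
      · simpa [hj] using h j
    · rcases eq_or_ne j i with rfl | hj
      · simpa using h.2
      · simpa [hj] using h.1 j
  rw [Measure.map_apply h_meas (.univ_pi hs), h_preimage, Measure.prod_prod, Measure.pi_pi,
    ← Finset.prod_erase_mul _ _ (Finset.mem_univ i),
    ← Finset.prod_erase_mul _ _ (Finset.mem_univ i)]
  congr 1
  rw [Function.update_self, measure_univ, mul_one]
  exact Finset.prod_congr rfl fun j hj ↦ by rw [Function.update_of_ne (Finset.ne_of_mem_erase hj)]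

lemma integral_pi_eq_integral_integral_update {ι : Type*} [Fintype ι] [DecidableEq ι]
    {α : ι → Type*} [∀ i, MeasurableSpace (α i)] (μ : ∀ i, Measure (α i))
    [∀ i, IsProbabilityMeasure (μ i)] {g : (∀ j, α j) → ℝ} (hg : Integrable g (Measure.pi μ))
    (i : ι) :
    ∫ y, g y ∂Measure.pi μ = ∫ y, ∫ x, g (update y i x) ∂μ i ∂Measure.pi μ := by
  have h_mp := measurePreserving_update μ i
  conv_lhs => rw [← h_mp.map_eq]
  rw [integral_map h_mp.aemeasurable (by rw [h_mp.map_eq]; exact hg.1)]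
  exact integral_prod _ (h_mp.integrable_comp_of_integrable hg)

lemma integrable_eval_pi_gaussianReal {ι : Type*} [Fintype ι] (i : ι) :
    Integrable (fun y : ι → ℝ ↦ y i) (Measure.pi fun _ ↦ gaussianReal 0 1) :=
  integrable_comp_eval (μ := fun _ : ι ↦ gaussianReal 0 1)
    ((memLp_id_gaussianReal 1).integrable le_rfl)

lemma integral_eval_mul_pi_gaussianReal_eq_integral_fderiv {ι : Type*} [Fintype ι] [DecidableEq ι]
    {G : (ι → ℝ) → ℝ} (hG : IsBddC1 G) (i : ι) :
    ∫ y, y i * G y ∂Measure.pi (fun _ ↦ gaussianReal 0 1) =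
      ∫ y, fderiv ℝ G y (Pi.single i 1) ∂Measure.pi fun _ ↦ gaussianReal 0 1 := by
  have hl_int := hG.integrable_mul continuous_id'.aestronglyMeasurable
    (integrable_eval_pi_gaussianReal i)
  have hr_int := hG.integrable_fderiv_apply continuous_id'.aestronglyMeasurable
    (integrable_const (μ := Measure.pi fun _ : ι ↦ gaussianReal 0 1) (Pi.single i (1 : ℝ)))
  rw [integral_pi_eq_integral_integral_update _ hl_int i,
    integral_pi_eq_integral_integral_update _ hr_int i]
  congr with y
  have h_update : AEStronglyMeasurable (fun x ↦ update y i x) (gaussianReal 0 1) :=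
    Continuous.aestronglyMeasurable (by fun_prop)
  simp only [Function.update_self]
  refine integral_id_mul_gaussianReal_eq_integral_deriv
    (fun x ↦ (hG.hasFDerivAt _).comp_hasDerivAt x (hasDerivAt_update y i x)) ?_ ?_ ?_
  · simpa using hG.integrable_mul h_update (integrable_const (1 : ℝ))
  · exact hG.integrable_mul h_update ((memLp_id_gaussianReal 1).integrable le_rfl)
  · exact hG.integrable_fderiv_apply h_update (integrable_const _)

lemma integral_dotProduct_mul_pi_gaussianReal_eq_integral_fderiv {ι : Type*} [Fintype ι]
    {G : (ι → ℝ) → ℝ} (hG : IsBddC1 G) (v : ι → ℝ) :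
    ∫ y, (v ⬝ᵥ y) * G y ∂Measure.pi (fun _ ↦ gaussianReal 0 1) =
      ∫ y, fderiv ℝ G y v ∂Measure.pi fun _ ↦ gaussianReal 0 1 := by
  classical
  set γ : Measure (ι → ℝ) := Measure.pi fun _ ↦ gaussianReal 0 1
  have h_id : AEStronglyMeasurable (fun y : ι → ℝ ↦ y) γ := continuous_id'.aestronglyMeasurable
  calc ∫ y, (v ⬝ᵥ y) * G y ∂γ
      = ∑ i, v i * ∫ y, y i * G y ∂γ := by
        simp only [dotProduct, Finset.sum_mul, mul_assoc, ← integral_const_mul]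
        exact integral_finsetSum _ fun i _ ↦
          (hG.integrable_mul h_id (integrable_eval_pi_gaussianReal i)).const_mul _
    _ = ∑ i, v i * ∫ y, fderiv ℝ G y (Pi.single i 1) ∂γ := by
        simp only [γ, integral_eval_mul_pi_gaussianReal_eq_integral_fderiv hG]
    _ = ∫ y, fderiv ℝ G y v ∂γ := by
        simp only [← integral_const_mul]
        rw [← integral_finsetSum _ fun i _ ↦ (hG.integrable_fderiv_apply h_id
          (integrable_const _)).const_mul _]
        congr with y
        conv_rhs => rw [pi_eq_sum_univ' v, map_sum]
        simp only [map_smul, smul_eq_mul]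

variable {E : Type*} [NormedAddCommGroup E] [InnerProductSpace ℝ E] [FiniteDimensional ℝ E]
  [MeasurableSpace E] [BorelSpace E]

theorem integral_inner_mul_stdGaussian_eq_integral_fderiv {G : E → ℝ} (hG : IsBddC1 G) (v : E) :
    ∫ y, ⟪v, y⟫ * G y ∂stdGaussian E = ∫ y, fderiv ℝ G y v ∂stdGaussian E := by
  set b := stdOrthonormalBasis ℝ E
  let L : (Fin (Module.finrank ℝ E) → ℝ) →L[ℝ] E :=
    ∑ i, (ContinuousLinearMap.proj i).smulRight (b i)
  have hL (y) : L y = ∑ i, y i • b i := by simp [L]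
  have h_map : stdGaussian E =
      (Measure.pi fun _ : Fin (Module.finrank ℝ E) ↦ gaussianReal 0 1).map L := by
    rw [stdGaussian_eq_map_pi_orthonormalBasis b]
    simp only [← hL]
  have hLv : L (fun i ↦ ⟪b i, v⟫) = v := by rw [hL, b.sum_repr']
  have h_inner (y) : ⟪v, L y⟫ = (fun i ↦ ⟪b i, v⟫) ⬝ᵥ y := by
    simp [hL, inner_sum, inner_smul_right, dotProduct, real_inner_comm, mul_comm]
  have h_cont := hG.continuous
  have h_cont' := hG.continuous_fderiv
  rw [h_map, integral_map (by fun_prop) (Continuous.aestronglyMeasurable (by fun_prop)),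
    integral_map (by fun_prop) (Continuous.aestronglyMeasurable (by fun_prop))]
  simpa only [hG.fderiv_comp_clm, h_inner, ContinuousLinearMap.comp_apply, hLv] using
    integral_dotProduct_mul_pi_gaussianReal_eq_integral_fderiv (hG.comp_clm L) fun i ↦ ⟪b i, v⟫

lemma integral_inner_sq_stdGaussian (v : E) : ∫ y, ⟪v, y⟫ ^ 2 ∂stdGaussian E = ‖v‖ ^ 2 := by
  have h_var := variance_dual_stdGaussian (innerSL ℝ v)
  rw [variance_of_integral_eq_zero (by fun_prop) (integral_strongDual_stdGaussian _),
    innerSL_apply_norm] at h_var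
  exact h_var

end GaussianIntegrationByParts

section SteinKernel

variable {Ω : Type*} [MeasurableSpace Ω] {P : Measure Ω} [IsProbabilityMeasure P]
  {ι : Type*} [Fintype ι]

/-- `T` is a Stein kernel of the random vector `X`, `T ω j` being the `j`-th row of the random
matrix: the identity `E[X_j F(X)] = E[⟨∇F(X), T_j⟩]`, which the standard Gaussian vector satisfies
with `T` the identity matrix, is required for all bounded `C¹` functions with bounded derivative. -/
def IsSteinKernel (P : Measure Ω) (X : Ω → EuclideanSpace ℝ ι)
    (T : Ω → ι → EuclideanSpace ℝ ι) : Prop :=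
  ∀ ⦃F : EuclideanSpace ℝ ι → ℝ⦄, IsBddC1 F →
    ∀ j, ∫ ω, X ω j * F (X ω) ∂P = ∫ ω, fderiv ℝ F (X ω) (T ω j) ∂P

lemma sq_integral_le_integral_sq {g : Ω → ℝ} (hg : MemLp g 2 P) :
    (∫ ω, g ω ∂P) ^ 2 ≤ ∫ ω, g ω ^ 2 ∂P := by
  have h_var := variance_nonneg g P
  rw [variance_eq_sub hg] at h_var
  simpa using h_var

lemma hasDerivAt_integral_sin_smul_add_cos_smul {E : Type*} [NormedAddCommGroup E]
    [NormedSpace ℝ E] {X Y : Ω → E} (hX : Integrable X P) (hY : Integrable Y P) {h : E → ℝ}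
    (hh : IsBddC1 h) (t : ℝ) :
    HasDerivAt (fun s ↦ ∫ ω, h (Real.sin s • X ω + Real.cos s • Y ω) ∂P)
      (∫ ω, fderiv ℝ h (Real.sin t • X ω + Real.cos t • Y ω)
        (Real.cos t • X ω - Real.sin t • Y ω) ∂P) t := by
  obtain ⟨C, hC⟩ := hh.exists_norm_fderiv_le
  have h_meas (s : ℝ) : AEStronglyMeasurable (fun ω ↦ Real.sin s • X ω + Real.cos s • Y ω) P :=
    (hX.1.const_smul _).add (hY.1.const_smul _)
  have h_int : Integrable (fun ω ↦ h (Real.sin t • X ω + Real.cos t • Y ω)) P := by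
    simpa using hh.integrable_mul (h_meas t) (integrable_const (1 : ℝ))
  have h_dom (ω) (s : ℝ) : ‖fderiv ℝ h (Real.sin s • X ω + Real.cos s • Y ω)
      (Real.cos s • X ω - Real.sin s • Y ω)‖ ≤ C * (‖X ω‖ + ‖Y ω‖) := by
    have hC₀ : 0 ≤ C := (norm_nonneg _).trans (hC 0)
    refine (ContinuousLinearMap.le_of_opNorm_le _ (hC _) _).trans ?_
    gcongr
    refine (norm_sub_le _ _).trans (add_le_add ?_ ?_) <;> rw [norm_smul]
    · exact mul_le_of_le_one_left (norm_nonneg _) (Real.abs_cos_le_one s)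
    · exact mul_le_of_le_one_left (norm_nonneg _) (Real.abs_sin_le_one s)
  have h_deriv (ω) (s : ℝ) : HasDerivAt (fun r ↦ h (Real.sin r • X ω + Real.cos r • Y ω))
      (fderiv ℝ h (Real.sin s • X ω + Real.cos s • Y ω)
        (Real.cos s • X ω - Real.sin s • Y ω)) s := by
    have h_path := ((Real.hasDerivAt_sin s).smul_const (X ω)).add
      ((Real.hasDerivAt_cos s).smul_const (Y ω))
    rw [neg_smul, ← sub_eq_add_neg] at h_path
    exact (hh.hasFDerivAt _).comp_hasDerivAt s h_path
  exact (hasDerivAt_integral_of_dominated_loc_of_deriv_le Filter.univ_mem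
    (.of_forall fun s ↦ hh.continuous.comp_aestronglyMeasurable (h_meas s)) h_int
    (hh.integrable_fderiv_apply (h_meas t) ((hX.smul _).sub (hY.smul _))).1
    (.of_forall fun ω s _ ↦ h_dom ω s) ((hX.norm.add hY.norm).const_mul C)
    (.of_forall fun ω s _ ↦ h_deriv ω s)).2

/-- The path `t ↦ sin t • X + cos t • Y` from the second coordinate `Y` of `Ω × E` (for us a
Gaussian vector independent of `X`) to `X`. -/
noncomputable def sinCosPath {E : Type*} [AddCommGroup E] [Module ℝ E] (X : Ω → E) (t : ℝ)
    (p : Ω × E) : E :=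
  Real.sin t • X p.1 + Real.cos t • p.2

local notation "γ" => stdGaussian (EuclideanSpace ℝ ι)

lemma integrable_snd_prod_stdGaussian :
    Integrable (fun p : Ω × EuclideanSpace ℝ ι ↦ p.2) (P.prod γ) :=
  IsGaussian.integrable_id.comp_snd P

variable {X : Ω → EuclideanSpace ℝ ι} {T : Ω → ι → EuclideanSpace ℝ ι}
  {F h : EuclideanSpace ℝ ι → ℝ}

lemma aestronglyMeasurable_sinCosPath (hX : AEStronglyMeasurable X P) (t : ℝ) :
    AEStronglyMeasurable (sinCosPath X t) (P.prod γ) := by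
  have hX_fst : AEStronglyMeasurable (fun p : Ω × EuclideanSpace ℝ ι ↦ X p.1) (P.prod γ) :=
    hX.comp_fst
  exact (hX_fst.const_smul (Real.sin t)).add
    (integrable_snd_prod_stdGaussian.1.const_smul (Real.cos t))

lemma IsSteinKernel.integral_coord_mul_sinCosPath (hT : IsSteinKernel P X T)
    (hX : Integrable X P) (hT_int : ∀ j, Integrable (T · j) P) (hF : IsBddC1 F) (t : ℝ) (j : ι) :
    ∫ p, X p.1 j * F (sinCosPath X t p) ∂P.prod γ =
      Real.sin t * ∫ p, fderiv ℝ F (sinCosPath X t p) (T p.1 j) ∂P.prod γ := by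
  have h_path := aestronglyMeasurable_sinCosPath hX.1 t
  rw [← integral_const_mul,
    integral_prod_symm _ (hF.integrable_mul h_path ((hX.eval_piLp j).comp_fst _)),
    integral_prod_symm _ ((hF.integrable_fderiv_apply h_path ((hT_int j).comp_fst _)).const_mul _)]
  congr with y
  simpa only [hF.fderiv_comp_smul_add_const, _root_.smul_apply, smul_eq_mul,
    sinCosPath] using hT (hF.comp_smul_add_const (Real.sin t) (Real.cos t • y)) j

lemma integral_inner_mul_sinCosPath (hX : AEStronglyMeasurable X P)
    {V : Ω → EuclideanSpace ℝ ι} (hV : Integrable V P) (hF : IsBddC1 F) (t : ℝ) :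
    ∫ p, ⟪V p.1, p.2⟫ * F (sinCosPath X t p) ∂P.prod γ =
      Real.cos t * ∫ p, fderiv ℝ F (sinCosPath X t p) (V p.1) ∂P.prod γ := by
  have h_path := aestronglyMeasurable_sinCosPath hX t
  have h_inner : Integrable (fun p : Ω × EuclideanSpace ℝ ι ↦ ⟪V p.1, p.2⟫) (P.prod γ) :=
    hV.op_fst_snd continuous_inner ⟨1, fun x y ↦ by
      simpa using norm_inner_le_norm (𝕜 := ℝ) x y⟩ IsGaussian.integrable_id
  rw [← integral_const_mul, integral_prod _ (hF.integrable_mul h_path h_inner),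
    integral_prod _ ((hF.integrable_fderiv_apply h_path (hV.comp_fst _)).const_mul _)]
  congr with ω
  have h_gauss := integral_inner_mul_stdGaussian_eq_integral_fderiv
    (hF.comp_smul_add_const (Real.cos t) (Real.sin t • X ω)) (V ω)
  simpa only [hF.fderiv_comp_smul_add_const, _root_.smul_apply, smul_eq_mul, sinCosPath,
    add_comm (Real.sin t • X ω)] using h_gauss

lemma memLp_inner_prod_stdGaussian {V : Ω → EuclideanSpace ℝ ι} (hV : MemLp V 2 P) :
    MemLp (fun p : Ω × EuclideanSpace ℝ ι ↦ ⟪V p.1, p.2⟫) 2 (P.prod γ) := by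
  have hV_fst : AEStronglyMeasurable (fun p : Ω × EuclideanSpace ℝ ι ↦ V p.1) (P.prod γ) :=
    hV.1.comp_fst
  have h_meas := hV_fst.inner (𝕜 := ℝ) (integrable_snd_prod_stdGaussian (P := P)).1
  rw [memLp_two_iff_integrable_sq h_meas]
  have h_norm : Integrable (fun p : Ω × EuclideanSpace ℝ ι ↦ ‖V p.1‖ ^ 2 * ‖p.2‖ ^ 2) (P.prod γ) :=
    hV.norm.integrable_sq.mul_prod (IsGaussian.memLp_two_id (μ := γ)).norm.integrable_sq
  refine h_norm.mono' (h_meas.pow 2) (.of_forall fun p ↦ ?_)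
  rw [norm_pow, ← mul_pow]
  gcongr
  exact norm_inner_le_norm _ _

lemma integral_inner_sq_prod_stdGaussian {V : Ω → EuclideanSpace ℝ ι} (hV : MemLp V 2 P) :
    ∫ p : Ω × EuclideanSpace ℝ ι, ⟪V p.1, p.2⟫ ^ 2 ∂P.prod γ = ∫ ω, ‖V ω‖ ^ 2 ∂P := by
  rw [integral_prod _ (memLp_inner_prod_stdGaussian hV).integrable_sq]
  simp only [integral_inner_sq_stdGaussian]

variable [DecidableEq ι]

/-- The vector `(T - 1) Y` that drives the interpolation `sinCosPath`: its norm measures how far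
the kernel `T` is from the identity, the kernel of the Gaussian vector `Y`. -/
noncomputable def kernelDefect (T : Ω → ι → EuclideanSpace ℝ ι) (p : Ω × EuclideanSpace ℝ ι) :
    EuclideanSpace ℝ ι :=
  WithLp.toLp 2 fun j ↦ ⟪T p.1 j - EuclideanSpace.single j 1, p.2⟫

lemma memLp_sub_single (hT : ∀ j, MemLp (T · j) 2 P) (j : ι) :
    MemLp (fun ω ↦ T ω j - EuclideanSpace.single j 1) 2 P :=
  (hT j).sub (memLp_const _)

lemma memLp_kernelDefect (hT : ∀ j, MemLp (T · j) 2 P) :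
    MemLp (kernelDefect T) 2 (P.prod γ) := by
  have h_coord (j : ι) : MemLp (fun p : Ω × EuclideanSpace ℝ ι ↦
      ⟪T p.1 j - EuclideanSpace.single j 1, p.2⟫) 2 (P.prod γ) :=
    memLp_inner_prod_stdGaussian (V := fun ω ↦ T ω j - EuclideanSpace.single j 1)
      (memLp_sub_single hT j)
  exact .of_eval_piLp h_coord

lemma integral_norm_kernelDefect_sq (hT : ∀ j, MemLp (T · j) 2 P) :
    ∫ p, ‖kernelDefect T p‖ ^ 2 ∂P.prod γ =
      ∑ j, ∫ ω, ‖T ω j - EuclideanSpace.single j 1‖ ^ 2 ∂P := by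
  have h_norm (p : Ω × EuclideanSpace ℝ ι) : ‖kernelDefect T p‖ ^ 2 =
      ∑ j, ⟪T p.1 j - EuclideanSpace.single j 1, p.2⟫ ^ 2 := EuclideanSpace.real_norm_sq_eq _
  simp only [h_norm]
  rw [integral_finsetSum _ fun j _ ↦
    (memLp_inner_prod_stdGaussian (memLp_sub_single hT j)).integrable_sq]
  exact Finset.sum_congr rfl fun j _ ↦ integral_inner_sq_prod_stdGaussian (memLp_sub_single hT j)

lemma apply_eq_sum_mul_apply_single (L : EuclideanSpace ℝ ι →L[ℝ] ℝ) (v : EuclideanSpace ℝ ι) :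
    L v = ∑ j, v j * L (EuclideanSpace.single j 1) := by
  conv_lhs => rw [← (EuclideanSpace.basisFun ι ℝ).sum_repr v]
  simp

/- Integrating by parts against `X` and against `Y` produces derivatives of `F`; a second Gaussian
integration by parts trades them back for `F` itself. -/
lemma IsSteinKernel.integral_deriv_sinCosPath_mul (hT : IsSteinKernel P X T) (hX : Integrable X P)
    (hT_memLp : ∀ j, MemLp (T · j) 2 P) (hF : IsBddC1 F) (t : ℝ) (j : ι) :
    ∫ p, (Real.cos t • X p.1 - Real.sin t • p.2) j * F (sinCosPath X t p) ∂P.prod γ =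
      Real.sin t * ∫ p, kernelDefect T p j * F (sinCosPath X t p) ∂P.prod γ := by
  have h_path := aestronglyMeasurable_sinCosPath hX.1 t
  have hT_int (i) : Integrable (T · i) P := (hT_memLp i).integrable one_le_two
  have hX_int := hF.integrable_mul h_path ((hX.eval_piLp j).comp_fst γ)
  have hV_int {V : Ω → EuclideanSpace ℝ ι} (hV : MemLp V 2 P) :=
    hF.integrable_mul h_path ((memLp_inner_prod_stdGaussian hV).integrable one_le_two)
  have hY_int := hV_int (memLp_const (EuclideanSpace.single j 1))
  have h_left : ∫ p, (Real.cos t • X p.1 - Real.sin t • p.2) j * F (sinCosPath X t p) ∂P.prod γ =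
      Real.cos t * ∫ p, X p.1 j * F (sinCosPath X t p) ∂P.prod γ -
        Real.sin t * ∫ p, ⟪EuclideanSpace.single j 1, p.2⟫ * F (sinCosPath X t p) ∂P.prod γ := by
    rw [← integral_const_mul, ← integral_const_mul,
      ← integral_sub (hX_int.const_mul _) (hY_int.const_mul _)]
    congr with p
    simp only [PiLp.sub_apply, PiLp.smul_apply, smul_eq_mul, EuclideanSpace.inner_single_left,
      Real.ringHom_apply, one_mul]
    ring
  have h_right : ∫ p, kernelDefect T p j * F (sinCosPath X t p) ∂P.prod γ =
      ∫ p, ⟪T p.1 j, p.2⟫ * F (sinCosPath X t p) ∂P.prod γ -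
        ∫ p, ⟪EuclideanSpace.single j 1, p.2⟫ * F (sinCosPath X t p) ∂P.prod γ := by
    rw [← integral_sub (hV_int (hT_memLp j)) hY_int]
    simp only [kernelDefect, inner_sub_left, sub_mul]
  rw [h_left, h_right, hT.integral_coord_mul_sinCosPath hX hT_int hF,
    integral_inner_mul_sinCosPath hX.1 (hT_int j) hF]
  ring

lemma IsSteinKernel.integral_fderiv_sinCosPath (hT : IsSteinKernel P X T) (hX : Integrable X P)
    (hT_memLp : ∀ j, MemLp (T · j) 2 P) (hh : ContDiff ℝ 2 h) (hh_supp : HasCompactSupport h)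
    (t : ℝ) :
    ∫ p, fderiv ℝ h (sinCosPath X t p) (Real.cos t • X p.1 - Real.sin t • p.2) ∂P.prod γ =
      Real.sin t * ∫ p, fderiv ℝ h (sinCosPath X t p) (kernelDefect T p) ∂P.prod γ := by
  have hF (j) : IsBddC1 fun x ↦ fderiv ℝ h x (EuclideanSpace.single j 1) := .of_hasCompactSupport
    ((hh.fderiv_right (m := 1) le_rfl).clm_apply contDiff_const) (hh_supp.fderiv_apply ℝ _)
  have h_expand {V : Ω × EuclideanSpace ℝ ι → EuclideanSpace ℝ ι} (hV : Integrable V (P.prod γ)) :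
      ∫ p, fderiv ℝ h (sinCosPath X t p) (V p) ∂P.prod γ =
        ∑ j, ∫ p, V p j * fderiv ℝ h (sinCosPath X t p) (EuclideanSpace.single j 1) ∂P.prod γ := by
    simp only [apply_eq_sum_mul_apply_single (fderiv ℝ h _) (V _)]
    exact integral_finsetSum _ fun j _ ↦
      (hF j).integrable_mul (aestronglyMeasurable_sinCosPath hX.1 t) (hV.eval_piLp j)
  rw [h_expand ((memLp_kernelDefect hT_memLp).integrable one_le_two), Finset.mul_sum,
    h_expand (V := fun p ↦ Real.cos t • X p.1 - Real.sin t • p.2)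
      (((hX.comp_fst γ).smul (Real.cos t)).sub (integrable_snd_prod_stdGaussian.smul (Real.sin t)))]
  exact Finset.sum_congr rfl fun j _ ↦ hT.integral_deriv_sinCosPath_mul hX hT_memLp (hF j) t j

lemma abs_integral_fderiv_kernelDefect_le (hT : ∀ j, MemLp (T · j) 2 P)
    (hh_lip : LipschitzWith 1 h) (Z : Ω × EuclideanSpace ℝ ι → EuclideanSpace ℝ ι) :
    |∫ p, fderiv ℝ h (Z p) (kernelDefect T p) ∂P.prod γ| ≤
      √(∑ j, ∫ ω, ‖T ω j - EuclideanSpace.single j 1‖ ^ 2 ∂P) := by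
  have h_defect := memLp_kernelDefect hT
  refine Real.le_sqrt_of_sq_le ?_
  calc |∫ p, fderiv ℝ h (Z p) (kernelDefect T p) ∂P.prod γ| ^ 2
      ≤ (∫ p, ‖kernelDefect T p‖ ∂P.prod γ) ^ 2 := by
        rw [← Real.norm_eq_abs]
        gcongr
        refine norm_integral_le_of_norm_le (h_defect.integrable one_le_two).norm
          (.of_forall fun p ↦ ?_)
        have h_norm : ‖fderiv ℝ h (Z p)‖ ≤ 1 := norm_fderiv_le_of_lipschitz ℝ hh_lip
        simpa using (fderiv ℝ h (Z p)).le_of_opNorm_le h_norm (kernelDefect T p)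
    _ ≤ ∫ p, ‖kernelDefect T p‖ ^ 2 ∂P.prod γ := sq_integral_le_integral_sq h_defect.norm
    _ = ∑ j, ∫ ω, ‖T ω j - EuclideanSpace.single j 1‖ ^ 2 ∂P := integral_norm_kernelDefect_sq hT

theorem IsSteinKernel.abs_integral_sub_integral_stdGaussian_le (hT : IsSteinKernel P X T)
    (hX : Integrable X P) (hT_memLp : ∀ j, MemLp (T · j) 2 P) (hh : ContDiff ℝ 2 h)
    (hh_supp : HasCompactSupport h) (hh_lip : LipschitzWith 1 h) :
    |∫ ω, h (X ω) ∂P - ∫ y, h y ∂γ| ≤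
      √(∑ j, ∫ ω, ‖T ω j - EuclideanSpace.single j 1‖ ^ 2 ∂P) := by
  set K := √(∑ j, ∫ ω, ‖T ω j - EuclideanSpace.single j 1‖ ^ 2 ∂P)
  set φ : ℝ → ℝ := fun t ↦ ∫ p, h (sinCosPath X t p) ∂P.prod γ
  have h_bdd : IsBddC1 h := .of_hasCompactSupport (hh.of_le one_le_two) hh_supp
  have hφ (t : ℝ) : HasDerivAt φ (Real.sin t *
      ∫ p, fderiv ℝ h (sinCosPath X t p) (kernelDefect T p) ∂P.prod γ) t := by
    rw [← hT.integral_fderiv_sinCosPath hX hT_memLp hh hh_supp t]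
    exact hasDerivAt_integral_sin_smul_add_cos_smul (hX.comp_fst γ)
      integrable_snd_prod_stdGaussian h_bdd t
  have hφ_zero : φ 0 = ∫ y, h y ∂γ := by
    simp [φ, sinCosPath, integral_fun_snd]
  have hφ_pi_div_two : φ (Real.pi / 2) = ∫ ω, h (X ω) ∂P := by
    simp [φ, sinCosPath, integral_fun_fst (fun ω ↦ h (X ω))]
  have h_bound : ‖φ (Real.pi / 2) - φ 0‖ ≤ K * (1 - Real.cos (Real.pi / 2)) := by
    refine image_norm_le_of_norm_deriv_right_le_deriv_boundary
      (a := 0) (b := Real.pi / 2) (f := fun t ↦ φ t - φ 0)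
      (B := fun t ↦ K * (1 - Real.cos t)) (B' := fun t ↦ K * Real.sin t)
      (fun t _ ↦ ((hφ t).sub_const _).continuousAt.continuousWithinAt)
      (fun t _ ↦ ((hφ t).sub_const _).hasDerivWithinAt) (by simp)
      (fun t ↦ by simpa using ((Real.hasDerivAt_cos t).const_sub 1).const_mul K)
      (fun t ht ↦ ?_) ⟨by positivity, le_rfl⟩
    have h_sin : 0 ≤ Real.sin t :=
      Real.sin_nonneg_of_nonneg_of_le_pi ht.1 (by linarith [ht.2, Real.pi_pos])
    rw [norm_mul, Real.norm_of_nonneg h_sin, mul_comm]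
    gcongr
    exact abs_integral_fderiv_kernelDefect_le hT_memLp hh_lip _
  simpa [hφ_zero, hφ_pi_div_two] using h_bound

end SteinKernel

section LipschitzApproximation

lemma abs_integral_sub_integral_le_of_forall_abs_sub_le {Ω : Type*} [MeasurableSpace Ω]
    {P : Measure Ω} [IsProbabilityMeasure P] {f h : Ω → ℝ} {ε : ℝ} (hf : Integrable f P)
    (hh : Integrable h P) (hε : ∀ x, |h x - f x| ≤ ε) :
    |∫ x, h x ∂P - ∫ x, f x ∂P| ≤ ε := by
  rw [← integral_sub hh hf]
  simpa using norm_integral_le_of_norm_le_const (μ := P) (f := fun x ↦ h x - f x) (.of_forall hε)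

variable {E : Type*} [NormedAddCommGroup E] {f : E → ℝ}

/-- The function `f` cut off at height `N - ‖x‖`, a compactly supported approximation of `f` with
the same Lipschitz constant `1`. -/
noncomputable def coneTruncation (f : E → ℝ) (N : ℕ) (x : E) : ℝ :=
  max (min (f x) (max (N - ‖x‖) 0)) (-max (N - ‖x‖) 0)

lemma lipschitzWith_coneTruncation (hf : LipschitzWith 1 f) (N : ℕ) :
    LipschitzWith 1 (coneTruncation f N) := by
  have h_cone : LipschitzWith 1 fun x : E ↦ max ((N : ℝ) - ‖x‖) 0 := by
    have h_sub : LipschitzWith 1 fun x : E ↦ (N : ℝ) - ‖x‖ := by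
      simpa using (LipschitzWith.const (α := E) (N : ℝ)).sub lipschitzWith_one_norm
    exact h_sub.max_const 0
  have h_trunc := (hf.min h_cone).max h_cone.neg
  rwa [max_self, max_self] at h_trunc

lemma hasCompactSupport_coneTruncation [ProperSpace E] (f : E → ℝ) (N : ℕ) :
    HasCompactSupport (coneTruncation f N) := by
  refine .intro (isCompact_closedBall (0 : E) N) fun x hx ↦ ?_
  rw [Metric.mem_closedBall, dist_zero_right] at hx
  have h_cone : max ((N : ℝ) - ‖x‖) 0 = 0 := max_eq_right (by linarith)
  simp [coneTruncation, h_cone]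

lemma abs_coneTruncation_le (f : E → ℝ) (N : ℕ) (x : E) : |coneTruncation f N x| ≤ |f x| := by
  have h_cone : 0 ≤ max ((N : ℝ) - ‖x‖) 0 := le_max_right _ _
  rw [coneTruncation, abs_le]
  exact ⟨le_max_of_le_left (le_min (neg_abs_le _) (by linarith [abs_nonneg (f x)])),
    max_le (min_le_of_left_le (le_abs_self _)) (by linarith [abs_nonneg (f x)])⟩

lemma tendsto_coneTruncation (f : E → ℝ) (x : E) :
    Filter.Tendsto (coneTruncation f · x) Filter.atTop (nhds (f x)) := by
  refine tendsto_const_nhds.congr' ?_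
  obtain ⟨M, hM⟩ := exists_nat_ge (|f x| + ‖x‖)
  filter_upwards [Filter.eventually_ge_atTop M] with N hN
  have hMN : (M : ℝ) ≤ N := by exact_mod_cast hN
  have h_abs : |f x| ≤ N - ‖x‖ := by linarith
  rw [coneTruncation, max_eq_left ((abs_nonneg _).trans h_abs), min_eq_left (abs_le.1 h_abs).2,
    max_eq_left (abs_le.1 h_abs).1]

variable [NormedSpace ℝ E] [FiniteDimensional ℝ E] [MeasurableSpace E] [BorelSpace E]

lemma exists_contDiff_lipschitzWith_abs_sub_le (hf : LipschitzWith 1 f)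
    (hf_supp : HasCompactSupport f) {ε : ℝ} (hε : 0 < ε) :
    ∃ h : E → ℝ, ContDiff ℝ 2 h ∧ HasCompactSupport h ∧ LipschitzWith 1 h ∧
      ∀ x, |h x - f x| ≤ ε := by
  let μ : Measure E := .addHaar
  let φ : ContDiffBump (0 : E) := ⟨ε / 2, ε, by positivity, by linarith⟩
  have h_int (x : E) : Integrable (fun t ↦ φ.normed μ t • f (x - t)) μ :=
    (φ.continuous_normed.smul (hf.continuous.comp (by fun_prop))).integrable_of_hasCompactSupport
      φ.hasCompactSupport_normed.smul_right
  refine ⟨convolution (φ.normed μ) f (ContinuousLinearMap.lsmul ℝ ℝ) μ,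
    φ.hasCompactSupport_normed.contDiff_convolution_left (n := 2) (μ := μ) _ φ.contDiff_normed
      hf.continuous.locallyIntegrable,
    φ.hasCompactSupport_normed.convolution _ hf_supp, .of_dist_le_mul fun x y ↦ ?_, fun x ↦ ?_⟩
  · simp only [convolution_def, ContinuousLinearMap.lsmul_apply, Real.dist_eq, NNReal.coe_one,
      one_mul]
    rw [← integral_sub (h_int x) (h_int y)]
    calc |∫ t, φ.normed μ t • f (x - t) - φ.normed μ t • f (y - t) ∂μ|
        ≤ ∫ t, φ.normed μ t * dist x y ∂μ := by
          rw [← Real.norm_eq_abs]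
          refine norm_integral_le_of_norm_le (φ.integrable_normed.mul_const _)
            (.of_forall fun t ↦ ?_)
          rw [← smul_sub, norm_smul, Real.norm_of_nonneg (φ.nonneg_normed t), ← dist_eq_norm]
          gcongr
          · exact φ.nonneg_normed t
          · simpa using hf.dist_le_mul (x - t) (y - t)
      _ = dist x y := by rw [integral_mul_const, φ.integral_normed, one_mul]
  · refine φ.dist_normed_convolution_le hf.continuous.aestronglyMeasurable fun y hy ↦ ?_
    simpa using (hf.dist_le_mul y x).trans (mul_le_mul_of_nonneg_left (Metric.mem_ball.1 hy).le
      zero_le_one)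

variable {μ ν : Measure E} [IsProbabilityMeasure μ] [IsProbabilityMeasure ν]

lemma abs_integral_sub_le_of_hasCompactSupport {K : ℝ}
    (hK : ∀ h : E → ℝ, ContDiff ℝ 2 h → HasCompactSupport h → LipschitzWith 1 h →
      |∫ x, h x ∂μ - ∫ x, h x ∂ν| ≤ K)
    (hf : LipschitzWith 1 f) (hf_supp : HasCompactSupport f) :
    |∫ x, f x ∂μ - ∫ x, f x ∂ν| ≤ K := by
  refine le_of_forall_pos_le_add fun ε hε ↦ ?_
  obtain ⟨h, hh, hh_supp, hh_lip, h_close⟩ :=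
    exists_contDiff_lipschitzWith_abs_sub_le hf hf_supp (half_pos hε)
  have hμ := abs_integral_sub_integral_le_of_forall_abs_sub_le (P := μ)
    (hf.continuous.integrable_of_hasCompactSupport hf_supp)
    (hh.continuous.integrable_of_hasCompactSupport hh_supp) h_close
  have hν := abs_integral_sub_integral_le_of_forall_abs_sub_le (P := ν)
    (hf.continuous.integrable_of_hasCompactSupport hf_supp)
    (hh.continuous.integrable_of_hasCompactSupport hh_supp) h_close
  have hμν := hK h hh hh_supp hh_lip
  rw [abs_le] at *
  constructor <;> linarith [hμ.1, hμ.2, hν.1, hν.2, hμν.1, hμν.2]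

theorem abs_integral_sub_le_of_lipschitzWith {K : ℝ} (hμ : Integrable id μ) (hν : Integrable id ν)
    (hK : ∀ h : E → ℝ, ContDiff ℝ 2 h → HasCompactSupport h → LipschitzWith 1 h →
      |∫ x, h x ∂μ - ∫ x, h x ∂ν| ≤ K)
    (hf : LipschitzWith 1 f) : |∫ x, f x ∂μ - ∫ x, f x ∂ν| ≤ K := by
  have hf_int {ρ : Measure E} [IsProbabilityMeasure ρ] (hρ : Integrable id ρ) : Integrable f ρ := by
    refine (hρ.norm.add (integrable_const |f 0|)).mono' hf.continuous.aestronglyMeasurable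
      (.of_forall fun x ↦ ?_)
    have h_dist : ‖f x - f 0‖ ≤ ‖x‖ := by simpa using hf.norm_sub_le x 0
    have h_triangle := norm_le_norm_add_norm_sub' (f x) (f 0)
    simp only [Pi.add_apply, id_eq, ← Real.norm_eq_abs]
    linarith
  have h_tendsto {ρ : Measure E} [IsProbabilityMeasure ρ] (hρ : Integrable id ρ) :
      Filter.Tendsto (fun N ↦ ∫ x, coneTruncation f N x ∂ρ) Filter.atTop
        (nhds (∫ x, f x ∂ρ)) :=
    tendsto_integral_of_dominated_convergence (fun x ↦ |f x|)
      (fun N ↦ (lipschitzWith_coneTruncation hf N).continuous.aestronglyMeasurable)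
      (hf_int hρ).abs (fun N ↦ .of_forall (abs_coneTruncation_le f N))
      (.of_forall (tendsto_coneTruncation f))
  exact le_of_tendsto ((h_tendsto hμ).sub (h_tendsto hν)).abs (.of_forall fun N ↦
    abs_integral_sub_le_of_hasCompactSupport hK (lipschitzWith_coneTruncation hf N)
      (hasCompactSupport_coneTruncation f N))

end LipschitzApproximation

section QuadForm

variable {n : Type*} [Fintype n]

/-- The Hermitian form `⟨M z, z⟩` of a matrix `M`, linear in `M`. -/
noncomputable def quadForm (z : n → ℂ) : Matrix n n ℂ →ₗ[ℂ] ℂ where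
  toFun M := star z ⬝ᵥ M *ᵥ z
  map_add' M N := by rw [add_mulVec, dotProduct_add]
  map_smul' c M := by rw [smul_mulVec, dotProduct_smul, RingHom.id_apply]

lemma quadForm_apply (z : n → ℂ) (M : Matrix n n ℂ) : quadForm z M = star z ⬝ᵥ M *ᵥ z := rfl

lemma quadForm_conjTranspose (z : n → ℂ) (M : Matrix n n ℂ) :
    quadForm z Mᴴ = star (quadForm z M) := by
  rw [quadForm_apply, quadForm_apply, star_dotProduct, star_mulVec, ← dotProduct_mulVec,
    conjTranspose_conjTranspose]

lemma ofReal_re_quadForm {M : Matrix n n ℂ} (hM : M.IsHermitian) (z : n → ℂ) :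
    ((quadForm z M).re : ℂ) = quadForm z M := by
  apply Complex.conj_eq_iff_re.1
  simpa [hM.eq] using (quadForm_conjTranspose z M).symm

lemma contDiff_quadForm (M : Matrix n n ℂ) {m : WithTop ℕ∞} : ContDiff ℝ m (quadForm · M) := by
  have h_expand : (quadForm · M) = fun z ↦ ∑ i, Complex.conjCLE (z i) * ∑ j, M i j * z j := by
    ext z
    simp [quadForm_apply, dotProduct, mulVec]
  rw [h_expand]
  fun_prop

@[fun_prop]
lemma continuous_quadForm_apply {N : (n → ℂ) → Matrix n n ℂ} (hN : Continuous N) :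
    Continuous fun z ↦ quadForm z (N z) := by
  simp only [quadForm_apply]
  fun_prop

lemma fderiv_quadForm (M : Matrix n n ℂ) (z w : n → ℂ) :
    fderiv ℝ (quadForm · M) z w = star w ⬝ᵥ M *ᵥ z + star z ⬝ᵥ M *ᵥ w := by
  have h_line : HasDerivAt (fun t : ℝ ↦ z + t • w) w 0 := by
    simpa using ((hasDerivAt_id (0 : ℝ)).smul_const w).const_add z
  have h_quad : HasFDerivAt (quadForm · M) (fderiv ℝ (quadForm · M) z) (z + (0 : ℝ) • w) := by
    simpa using ((contDiff_quadForm M).differentiable one_ne_zero z).hasFDerivAt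
  have h_expand (t : ℝ) : quadForm (z + t • w) M = quadForm z M +
      t • (star w ⬝ᵥ M *ᵥ z + star z ⬝ᵥ M *ᵥ w) + t ^ 2 • quadForm w M := by
    simp only [quadForm_apply, star_add, star_smul, star_trivial, mulVec_add, mulVec_smul,
      dotProduct_add, add_dotProduct, smul_dotProduct, dotProduct_smul, smul_add,
      Complex.real_smul, Complex.ofReal_pow]
    ring
  refine (h_quad.comp_hasDerivAt (0 : ℝ) h_line).unique ?_
  simp only [Function.comp_def, h_expand]
  generalize star w ⬝ᵥ M *ᵥ z + star z ⬝ᵥ M *ᵥ w = c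
  simpa using (((hasDerivAt_id (0 : ℝ)).smul_const _).const_add (quadForm z M)).fun_add
    ((hasDerivAt_pow 2 (0 : ℝ)).smul_const (quadForm w M))

lemma fderiv_quadForm_mulVec {A : Matrix n n ℂ} (hA : A ∈ skewAdjoint (Matrix n n ℂ))
    (M : Matrix n n ℂ) (z : n → ℂ) :
    fderiv ℝ (quadForm · M) z (A *ᵥ z) = quadForm z ⁅M, A⁆ := by
  have hA' : Aᴴ = -A := hA
  rw [fderiv_quadForm, star_mulVec, ← dotProduct_mulVec, mulVec_mulVec, mulVec_mulVec, hA',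
    neg_mul, add_comm, Ring.lie_def, sub_eq_add_neg, map_add, quadForm_apply, quadForm_apply]

lemma quadForm_one_mulVec [DecidableEq n] {V : Matrix n n ℂ} (hV : V ∈ unitaryGroup n ℂ)
    (z : n → ℂ) : quadForm (V *ᵥ z) 1 = quadForm z 1 := by
  have hV' : Vᴴ * V = 1 := mem_unitaryGroup_iff'.1 hV
  rw [quadForm_apply, one_mulVec, star_mulVec, ← dotProduct_mulVec, mulVec_mulVec, hV',
    quadForm_apply]

section MatrixUnits

variable [DecidableEq n]

lemma quadForm_mul_single (z : n → ℂ) (M : Matrix n n ℂ) (a p : n) :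
    quadForm z (M * single a p 1) = (star z ᵥ* M) a * z p := by
  rw [quadForm_apply, ← mulVec_mulVec, dotProduct_mulVec]
  simp [single_mulVec, Function.update_apply, dotProduct]

lemma quadForm_single_mul (z : n → ℂ) (M : Matrix n n ℂ) (p a : n) :
    quadForm z (single p a 1 * M) = star (z p) * (M *ᵥ z) a := by
  rw [quadForm_apply, ← mulVec_mulVec, single_mulVec]
  simp [dotProduct, Function.update_apply]

lemma sum_lie_single (D : Matrix n n ℂ) :
    ∑ a, ∑ p, ⁅D * single a p 1, single p a 1⁆ =
      (Fintype.card n : ℂ) • D - D.trace • (1 : Matrix n n ℂ) := by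
  have h_left (a p : n) : D * single a p (1 : ℂ) * single p a 1 = D * single a a 1 := by
    rw [Matrix.mul_assoc, single_mul_single_same, mul_one]
  have h_right (a p : n) :
      single p a (1 : ℂ) * (D * single a p 1) = D a a • single p p (1 : ℂ) := by
    rw [← Matrix.mul_assoc, single_mul_mul_single, smul_single]
    simp
  simp only [Ring.lie_def, h_left, h_right, Finset.sum_sub_distrib, Finset.sum_const,
    Finset.card_univ, ← Finset.smul_sum, ← Finset.mul_sum, sum_single_one, mul_one,
    Nat.cast_smul_eq_nsmul, ← Finset.sum_smul, trace, diag]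

lemma sum_quadForm_mul_quadForm_lie_single (z : n → ℂ) (D N : Matrix n n ℂ) :
    ∑ a, ∑ p, quadForm z (D * single a p 1) * quadForm z ⁅N, single p a 1⁆ =
      quadForm z D * quadForm z N - quadForm z (D * N) * quadForm z 1 := by
  have hD : ∑ a, (star z ᵥ* D) a * z a = quadForm z D := (dotProduct_mulVec _ _ _).symm
  have hN : ∑ p, (star z ᵥ* N) p * z p = quadForm z N := (dotProduct_mulVec _ _ _).symm
  have hDN : ∑ a, (star z ᵥ* D) a * (N *ᵥ z) a = quadForm z (D * N) := by
    rw [quadForm_apply, ← mulVec_mulVec, dotProduct_mulVec, dotProduct]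
  have h_one : ∑ p, star (z p) * z p = quadForm z 1 := by
    rw [quadForm_apply, one_mulVec, dotProduct]
    rfl
  rw [← hD, ← hN, ← hDN, ← h_one, Finset.sum_mul_sum, Finset.sum_mul_sum,
    ← Finset.sum_sub_distrib]
  refine Finset.sum_congr rfl fun a _ ↦ ?_
  rw [← Finset.sum_sub_distrib]
  refine Finset.sum_congr rfl fun p _ ↦ ?_
  rw [Ring.lie_def, map_sub, quadForm_mul_single, quadForm_mul_single, quadForm_single_mul]
  ring

end MatrixUnits

end QuadForm

section SphereUniform

variable {n : Type*} [Fintype n] [DecidableEq n]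

section Exponential

open scoped Matrix.Norms.Frobenius

lemma exp_smul_mem_unitaryGroup {A : Matrix n n ℂ} (hA : A ∈ skewAdjoint (Matrix n n ℂ)) (t : ℝ) :
    NormedSpace.exp (t • A) ∈ unitaryGroup n ℂ :=
  NormedSpace.exp_mem_unitary_of_mem_skewAdjoint (skewAdjoint.smul_mem t hA)

lemma hasDerivAt_exp_smul_mulVec (A : Matrix n n ℂ) (z : n → ℂ) (t : ℝ) :
    HasDerivAt (fun s : ℝ ↦ NormedSpace.exp (s • A) *ᵥ z)
      (A *ᵥ (NormedSpace.exp (t • A) *ᵥ z)) t := by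
  let L : Matrix n n ℂ →ₗ[ℝ] n → ℂ := (mulVecBilin ℝ ℝ).flip z
  rw [mulVec_mulVec]
  exact L.toContinuousLinearMap.hasFDerivAt.comp_hasDerivAt t (hasDerivAt_exp_smul_const' A t)

end Exponential

/-- The uniform distribution on the unit sphere of `ℂⁿ`: it is carried by the sphere and invariant
under the unitary group, which determines it among probability measures. -/
structure IsSphereUniform (μ : Measure (n → ℂ)) : Prop where
  ae_quadForm_one : ∀ᵐ z ∂μ, quadForm z 1 = 1
  map_mulVec : ∀ V ∈ unitaryGroup n ℂ, μ.map (V *ᵥ ·) = μ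

lemma isCompact_setOf_quadForm_one_eq_one :
    IsCompact {z : n → ℂ | quadForm z 1 = 1} := by
  refine Metric.isCompact_of_isClosed_isBounded
    (isClosed_eq (contDiff_quadForm 1 (m := 0)).continuous continuous_const)
    ((Metric.isBounded_closedBall (x := (0 : n → ℂ)) (r := 1)).subset fun z hz ↦ ?_)
  rw [mem_closedBall_zero_iff, pi_norm_le_iff_of_nonneg zero_le_one]
  intro i
  have h_sum : ∑ j, ‖z j‖ ^ 2 = 1 := by
    have h_one : quadForm z 1 = 1 := hz
    simp only [quadForm_apply, one_mulVec, dotProduct, Pi.star_apply, RCLike.star_def,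
      Complex.conj_mul'] at h_one
    exact_mod_cast h_one
  rw [← sq_le_one_iff₀ (norm_nonneg _), ← h_sum]
  exact Finset.single_le_sum (f := fun j ↦ ‖z j‖ ^ 2) (fun j _ ↦ sq_nonneg _) (Finset.mem_univ i)

namespace IsSphereUniform

variable {μ : Measure (n → ℂ)}

lemma integral_comp_mulVec (hμ : IsSphereUniform μ) {V : Matrix n n ℂ}
    (hV : V ∈ unitaryGroup n ℂ) {G : (n → ℂ) → ℂ} (hG : Continuous G) :
    ∫ z, G (V *ᵥ z) ∂μ = ∫ z, G z ∂μ := by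
  have h_meas : AEMeasurable (V *ᵥ ·) μ :=
    (by fun_prop : Continuous fun z : n → ℂ ↦ V *ᵥ z).aemeasurable
  rw [← integral_map h_meas hG.aestronglyMeasurable, hμ.map_mulVec V hV]

variable [IsProbabilityMeasure μ]

lemma memLp_of_continuous {E : Type*} [NormedAddCommGroup E] [SecondCountableTopology E]
    (hμ : IsSphereUniform μ) {G : (n → ℂ) → E} (hG : Continuous G) (p : ENNReal) :
    MemLp G p μ := by
  obtain ⟨C, hC⟩ := isCompact_setOf_quadForm_one_eq_one.exists_bound_of_continuousOn hG.continuousOn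
  exact .of_bound hG.aestronglyMeasurable C (hμ.ae_quadForm_one.mono hC)

lemma integrable_of_continuous {E : Type*} [NormedAddCommGroup E] [SecondCountableTopology E]
    (hμ : IsSphereUniform μ) {G : (n → ℂ) → E} (hG : Continuous G) : Integrable G μ :=
  memLp_one_iff_integrable.1 (hμ.memLp_of_continuous hG 1)

lemma card_pos (hμ : IsSphereUniform μ) : 0 < Fintype.card n := by
  obtain ⟨z, hz⟩ := hμ.ae_quadForm_one.exists
  refine Fintype.card_pos_iff.2 (not_isEmpty_iff.1 fun _ ↦ ?_)
  simp [quadForm_apply, dotProduct] at hz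

/- Differentiate the invariance of the integral along the one-parameter group `exp (t A)`. -/
lemma integral_fderiv_mulVec (hμ : IsSphereUniform μ) {A : Matrix n n ℂ}
    (hA : A ∈ skewAdjoint (Matrix n n ℂ)) {G : (n → ℂ) → ℂ} (hG : ContDiff ℝ 1 G) :
    ∫ z, fderiv ℝ G z (A *ᵥ z) ∂μ = 0 := by
  set U : ℝ → Matrix n n ℂ := fun t ↦ NormedSpace.exp (t • A)
  have hU (t : ℝ) : U t ∈ unitaryGroup n ℂ := exp_smul_mem_unitaryGroup hA t
  have hU_cont (t : ℝ) : Continuous (U t *ᵥ ·) := by fun_prop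
  have h_cont : Continuous fun z ↦ fderiv ℝ G z (A *ᵥ z) :=
    (hG.continuous_fderiv one_ne_zero).clm_apply (by fun_prop)
  obtain ⟨C, hC⟩ := isCompact_setOf_quadForm_one_eq_one.exists_bound_of_continuousOn
    h_cont.continuousOn
  have h_deriv := (hasDerivAt_integral_of_dominated_loc_of_deriv_le (μ := μ) (s := Set.univ)
    (x₀ := (0 : ℝ)) (F := fun t z ↦ G (U t *ᵥ z)) (bound := fun _ ↦ C) Filter.univ_mem
    (.of_forall fun t ↦ (hG.continuous.comp (hU_cont t)).aestronglyMeasurable)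
    (hμ.integrable_of_continuous (hG.continuous.comp (hU_cont 0)))
    (h_cont.comp (hU_cont 0)).aestronglyMeasurable
    (hμ.ae_quadForm_one.mono fun z hz t _ ↦ hC _ ((quadForm_one_mulVec (hU t) z).trans hz))
    (integrable_const C)
    (.of_forall fun z t _ ↦ (hG.differentiable one_ne_zero _).hasFDerivAt.comp_hasDerivAt t
      (hasDerivAt_exp_smul_mulVec A z t))).2
  simp only [hμ.integral_comp_mulVec (hU _) hG.continuous] at h_deriv
  simpa [U] using h_deriv.unique (hasDerivAt_const _ _)

end IsSphereUniform

end SphereUniform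

section OrbitGradient

variable {n : Type*} [Fintype n] [DecidableEq n]

/-- `N` is a matrix-valued gradient of `u` along the orbits of the unitary group: the derivative of
`u` in a skew-adjoint direction `A` is the Hermitian form of the commutator of `N` with `A`. This
is the calculus in which polynomials in the Hermitian forms `quadForm z D` can be differentiated
while staying inside that class of functions. -/
structure HasOrbitGradient (u : (n → ℂ) → ℂ) (N : (n → ℂ) → Matrix n n ℂ) : Prop where
  contDiff : ContDiff ℝ 1 u
  continuous_gradient : Continuous N
  fderiv_mulVec : ∀ z, ∀ A ∈ skewAdjoint (Matrix n n ℂ),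
    fderiv ℝ u z (A *ᵥ z) = quadForm z ⁅N z, A⁆

namespace HasOrbitGradient

protected lemma const (c : ℂ) : HasOrbitGradient (n := n) (fun _ ↦ c) fun _ ↦ 0 where
  contDiff := contDiff_const
  continuous_gradient := continuous_const
  fderiv_mulVec z A _ := by simp

protected lemma quadForm (D : Matrix n n ℂ) : HasOrbitGradient (quadForm · D) fun _ ↦ D where
  contDiff := contDiff_quadForm D
  continuous_gradient := continuous_const
  fderiv_mulVec z _ hA := fderiv_quadForm_mulVec hA D z

protected lemma mul {u v : (n → ℂ) → ℂ} {M N : (n → ℂ) → Matrix n n ℂ} (hu : HasOrbitGradient u M)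
    (hv : HasOrbitGradient v N) :
    HasOrbitGradient (fun z ↦ u z * v z) fun z ↦ u z • N z + v z • M z where
  contDiff := hu.contDiff.mul hv.contDiff
  continuous_gradient := (hu.contDiff.continuous.smul hv.continuous_gradient).add
    (hv.contDiff.continuous.smul hu.continuous_gradient)
  fderiv_mulVec z A hA := by
    rw [fderiv_fun_mul (hu.contDiff.differentiable one_ne_zero z)
      (hv.contDiff.differentiable one_ne_zero z), _root_.add_apply, _root_.smul_apply,
      _root_.smul_apply, hu.fderiv_mulVec z A hA, hv.fderiv_mulVec z A hA]
    simp only [add_lie, smul_lie, map_add, map_smul, smul_eq_mul]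

protected lemma pow {u : (n → ℂ) → ℂ} {N : (n → ℂ) → Matrix n n ℂ} (hu : HasOrbitGradient u N)
    (k : ℕ) : HasOrbitGradient (fun z ↦ u z ^ k) fun z ↦ (k * u z ^ (k - 1)) • N z where
  contDiff := hu.contDiff.pow k
  continuous_gradient :=
    (continuous_const.mul (hu.contDiff.continuous.pow _)).smul hu.continuous_gradient
  fderiv_mulVec z A hA := by
    rw [fderiv_fun_pow k (hu.contDiff.differentiable one_ne_zero z), _root_.smul_apply,
      hu.fderiv_mulVec z A hA, smul_lie, map_smul, nsmul_eq_mul]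

end HasOrbitGradient

variable {μ : Measure (n → ℂ)} [IsProbabilityMeasure μ] {u : (n → ℂ) → ℂ}
  {N : (n → ℂ) → Matrix n n ℂ}

lemma IsSphereUniform.integral_quadForm_lie (hμ : IsSphereUniform μ)
    (hu : HasOrbitGradient u N) (A : Matrix n n ℂ) :
    ∫ z, quadForm z ⁅N z, A⁆ ∂μ = 0 := by
  have hN := hu.continuous_gradient
  have h_skew {S : Matrix n n ℂ} (hS : S ∈ skewAdjoint (Matrix n n ℂ)) :
      ∫ z, quadForm z ⁅N z, S⁆ ∂μ = 0 := by
    rw [← hμ.integral_fderiv_mulVec hS hu.contDiff]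
    exact integral_congr_ae (.of_forall fun z ↦ (hu.fderiv_mulVec z S hS).symm)
  have h_hermitian {H : Matrix n n ℂ} (hH : H ∈ selfAdjoint (Matrix n n ℂ)) :
      ∫ z, quadForm z ⁅N z, H⁆ ∂μ = 0 := by
    have hIH : Complex.I • H ∈ skewAdjoint (Matrix n n ℂ) := by
      rw [skewAdjoint.mem_iff, star_smul, selfAdjoint.mem_iff.1 hH]
      simp
    have h_zero := h_skew hIH
    simp only [lie_smul, map_smul, smul_eq_mul] at h_zero
    rw [integral_const_mul] at h_zero
    exact (mul_eq_zero.1 h_zero).resolve_left Complex.I_ne_zero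
  have h_split (z : n → ℂ) : quadForm z ⁅N z, A⁆ =
      quadForm z ⁅N z, (ℜ A : Matrix n n ℂ)⁆ +
        Complex.I * quadForm z ⁅N z, (ℑ A : Matrix n n ℂ)⁆ := by
    conv_lhs => rw [← realPart_add_I_smul_imaginaryPart A]
    simp only [lie_add, lie_smul, map_add, map_smul, smul_eq_mul]
  have h_cont (S : Matrix n n ℂ) : Continuous fun z ↦ quadForm z ⁅N z, S⁆ := by
    simp only [Ring.lie_def]
    fun_prop
  simp only [h_split]
  rw [integral_add (hμ.integrable_of_continuous (h_cont _))
    (hμ.integrable_of_continuous ((h_cont _).const_mul _)), integral_const_mul, h_hermitian (ℜ A).2,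
    h_hermitian (ℑ A).2]
  simp

/- Apply the vanishing of the commutator integrals to `u Q(C)` in the direction `A`, where
`A = E_pa` and `C = D E_ap` run over matrix units, and sum over `a` and `p`. -/
lemma IsSphereUniform.card_mul_integral_mul_quadForm (hμ : IsSphereUniform μ)
    (hu : HasOrbitGradient u N) (D : Matrix n n ℂ) :
    Fintype.card n * ∫ z, u z * quadForm z D ∂μ = D.trace * ∫ z, u z ∂μ +
      ∫ z, (quadForm z (D * N z) - quadForm z D * quadForm z (N z)) ∂μ := by
  have hN := hu.continuous_gradient
  have hu_cont := hu.contDiff.continuous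
  set C : n → n → Matrix n n ℂ := fun a p ↦ D * single a p 1
  set G : n → n → (n → ℂ) → ℂ := fun a p z ↦ u z * quadForm z ⁅C a p, single p a 1⁆ +
    quadForm z (C a p) * quadForm z ⁅N z, single p a 1⁆
  have hG_cont (a p : n) : Continuous (G a p) := by
    simp only [G, Ring.lie_def]
    fun_prop
  have hG_integral (a p : n) : ∫ z, G a p z ∂μ = 0 := by
    rw [← hμ.integral_quadForm_lie (hu.mul (.quadForm (C a p))) (single p a 1)]
    simp only [G, add_lie, smul_lie, map_add, map_smul, smul_eq_mul]
  have hG_sum : ∀ᵐ z ∂μ, ∑ a, ∑ p, G a p z = Fintype.card n * (u z * quadForm z D) -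
      D.trace * u z - (quadForm z (D * N z) - quadForm z D * quadForm z (N z)) := by
    filter_upwards [hμ.ae_quadForm_one] with z hz
    simp only [G, C, Finset.sum_add_distrib, ← Finset.mul_sum, ← map_sum, sum_lie_single,
      sum_quadForm_mul_quadForm_lie_single, map_sub, map_smul, smul_eq_mul, hz]
    ring
  have h_int {H : (n → ℂ) → ℂ} (hH : Continuous H) := hμ.integrable_of_continuous hH
  have h_zero := integral_congr_ae hG_sum
  rw [integral_finsetSum _ fun a _ ↦ integrable_finsetSum _ fun p _ ↦ h_int (hG_cont a p),
    Finset.sum_congr rfl fun a _ ↦ integral_finsetSum _ fun p _ ↦ h_int (hG_cont a p),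
    integral_sub (h_int (by fun_prop)) (h_int (by fun_prop)),
    integral_sub (h_int (by fun_prop)) (h_int (by fun_prop)),
    integral_const_mul, integral_const_mul] at h_zero
  simp only [hG_integral, Finset.sum_const_zero] at h_zero
  linear_combination -h_zero

end OrbitGradient

section Moments

variable {n : Type*} [Fintype n] [DecidableEq n] {μ : Measure (n → ℂ)} [IsProbabilityMeasure μ]

namespace IsSphereUniform

lemma card_mul_integral_quadForm (hμ : IsSphereUniform μ) (D : Matrix n n ℂ) :
    Fintype.card n * ∫ z, quadForm z D ∂μ = D.trace := by
  simpa using hμ.card_mul_integral_mul_quadForm (.const 1) D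

lemma card_add_mul_integral_quadForm_pow_mul_quadForm (hμ : IsSphereUniform μ)
    (B D : Matrix n n ℂ) (k : ℕ) :
    (Fintype.card n + k + 1) * ∫ z, quadForm z B ^ (k + 1) * quadForm z D ∂μ =
      D.trace * ∫ z, quadForm z B ^ (k + 1) ∂μ +
        (k + 1) * ∫ z, quadForm z B ^ k * quadForm z (D * B) ∂μ := by
  have h_parts := hμ.card_mul_integral_mul_quadForm ((HasOrbitGradient.quadForm B).pow (k + 1)) D
  have h_gradient (z : n → ℂ) :
      quadForm z (D * ((k + 1 : ℕ) * quadForm z B ^ k) • B) -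
        quadForm z D * quadForm z (((k + 1 : ℕ) * quadForm z B ^ k) • B) =
      (k + 1) * (quadForm z B ^ k * quadForm z (D * B)) -
        (k + 1) * (quadForm z B ^ (k + 1) * quadForm z D) := by
    rw [Matrix.mul_smul, map_smul, map_smul, smul_eq_mul, smul_eq_mul]
    push_cast
    ring
  simp only [add_tsub_cancel_right, h_gradient] at h_parts
  rw [integral_sub (hμ.integrable_of_continuous (by fun_prop))
    (hμ.integrable_of_continuous (by fun_prop)), integral_const_mul, integral_const_mul] at h_parts
  linear_combination h_parts

lemma integral_quadForm_mul_quadForm (hμ : IsSphereUniform μ) (C D : Matrix n n ℂ) :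
    Fintype.card n * (Fintype.card n + 1) * ∫ z, quadForm z C * quadForm z D ∂μ =
      C.trace * D.trace + (C * D).trace := by
  have h_second := hμ.card_add_mul_integral_quadForm_pow_mul_quadForm C D 0
  simp only [Nat.cast_zero, add_zero, zero_add, pow_one, pow_zero, one_mul] at h_second
  rw [trace_mul_comm C, mul_assoc, h_second]
  linear_combination D.trace * hμ.card_mul_integral_quadForm C +
    hμ.card_mul_integral_quadForm (D * C)

lemma integral_norm_quadForm_sub_sq (hμ : IsSphereUniform μ) (D : Matrix n n ℂ) :
    Fintype.card n * (Fintype.card n + 1) *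
        ∫ z, ‖quadForm z D - D.trace / Fintype.card n‖ ^ 2 ∂μ =
      (D * Dᴴ).trace.re - ‖D.trace‖ ^ 2 / Fintype.card n := by
  have h_card : (Fintype.card n : ℂ) ≠ 0 := by exact_mod_cast hμ.card_pos.ne'
  set c : ℂ := D.trace / Fintype.card n with hc
  set D₀ : Matrix n n ℂ := D - c • 1 with hD₀
  have h_trace : D₀.trace = 0 := by
    simp [D₀, c, h_card]
  have h_sq : ∀ᵐ z ∂μ, quadForm z D₀ * quadForm z D₀ᴴ = ((‖quadForm z D - c‖ ^ 2 : ℝ) : ℂ) := by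
    filter_upwards [hμ.ae_quadForm_one] with z hz
    rw [quadForm_conjTranspose, RCLike.star_def, Complex.mul_conj', hD₀, map_sub, map_smul, hz]
    simp
  have h_moment := hμ.integral_quadForm_mul_quadForm D₀ D₀ᴴ
  rw [integral_congr_ae h_sq, integral_complex_ofReal, h_trace, zero_mul, zero_add] at h_moment
  have h_trace_mul : (D₀ * D₀ᴴ).trace = (D * Dᴴ).trace - (‖D.trace‖ ^ 2 / Fintype.card n : ℝ) := by
    simp only [hD₀, hc, conjTranspose_sub, conjTranspose_smul, star_div₀, RCLike.star_def,
      star_natCast, conjTranspose_one, mul_sub, sub_mul, Algebra.smul_mul_assoc, one_mul,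
      Algebra.mul_smul_comm, mul_one, trace_sub, trace_smul, trace_conjTranspose, smul_eq_mul,
      trace_one, Complex.ofReal_div, Complex.ofReal_pow, ← Complex.mul_conj',
      Complex.ofReal_natCast]
    field_simp
    ring
  rw [h_trace_mul] at h_moment
  have h_re := congrArg Complex.re h_moment
  simpa [← Complex.ofReal_natCast, ← Complex.ofReal_pow] using h_re

lemma integral_quadForm_pow_four (hμ : IsSphereUniform μ) {B : Matrix n n ℂ} (hB : B.trace = 0) :
    Fintype.card n * (Fintype.card n + 1) * (Fintype.card n + 2) * (Fintype.card n + 3) *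
        ∫ z, quadForm z B ^ 4 ∂μ =
      3 * ((B * B).trace ^ 2 + 2 * (B * B * B * B).trace) := by
  have h_four := hμ.card_add_mul_integral_quadForm_pow_mul_quadForm B B 2
  have h_three := hμ.card_add_mul_integral_quadForm_pow_mul_quadForm B (B * B) 1
  have h_two := hμ.integral_quadForm_mul_quadForm B B
  have h_two' := hμ.integral_quadForm_mul_quadForm B (B * B * B)
  simp only [hB, zero_mul, zero_add, ← Matrix.mul_assoc, ← sq (quadForm _ B), ← pow_succ, pow_one,
    Nat.reduceAdd] at h_four h_three h_two h_two'
  push_cast at h_four h_three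
  linear_combination Fintype.card n * (Fintype.card n + 1) * (Fintype.card n + 2) * h_four +
    3 * Fintype.card n * (Fintype.card n + 1) * h_three + 3 * (B * B).trace * h_two + 6 * h_two'

end IsSphereUniform

end Moments

section SphereSteinKernel

variable {n ι : Type*} [Fintype n] {C : ι → Matrix n n ℂ}

/-- The random vector `X_k = Re ⟨C_k z, z⟩` on the sphere; the real part only serves to land in
`ℝ`, as the matrices will be Hermitian. -/
noncomputable def quadFormVec (C : ι → Matrix n n ℂ) (z : n → ℂ) : EuclideanSpace ℝ ι :=
  WithLp.toLp 2 fun k ↦ (quadForm z (C k)).re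

/-- A Stein kernel of `quadFormVec C` under the uniform distribution on the sphere, as produced by
integration by parts along the orbits of the unitary group. -/
noncomputable def quadFormKernel (C : ι → Matrix n n ℂ) (z : n → ℂ) (j : ι) : EuclideanSpace ℝ ι :=
  WithLp.toLp 2 fun k ↦
    (quadForm z (C j * C k) - quadForm z (C j) * quadForm z (C k)).re / Fintype.card n

lemma quadFormVec_ofReal_smul (r : ℝ) (z : n → ℂ) :
    quadFormVec (fun k ↦ (r : ℂ) • C k) z = r • quadFormVec C z := by
  ext k
  simp [quadFormVec]

lemma quadFormKernel_ofReal_smul (r : ℝ) (z : n → ℂ) (j : ι) :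
    quadFormKernel (fun k ↦ (r : ℂ) • C k) z j = r ^ 2 • quadFormKernel C z j := by
  ext k
  simp only [quadFormKernel, smul_mul_smul_comm, map_smul, smul_eq_mul, mul_mul_mul_comm,
    ← mul_sub, ← Complex.ofReal_mul, Complex.re_ofReal_mul, PiLp.smul_apply]
  ring

lemma continuous_quadFormKernel (j : ι) : Continuous (quadFormKernel C · j) := by
  unfold quadFormKernel
  fun_prop

@[fun_prop]
lemma continuous_quadFormVec : Continuous (quadFormVec C) := by
  unfold quadFormVec
  fun_prop

lemma contDiff_quadFormVec [Fintype ι] : ContDiff ℝ 1 (quadFormVec C) :=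
  contDiff_euclidean.2 fun k ↦ Complex.reCLM.contDiff.comp (contDiff_quadForm (C k))

lemma fderiv_quadFormVec [Finite ι] (z w : n → ℂ) (k : ι) :
    fderiv ℝ (quadFormVec C) z w k = (fderiv ℝ (quadForm · (C k)) z w).re := by
  have := Fintype.ofFinite ι
  have h_vec := (contDiff_quadFormVec (C := C)).differentiable one_ne_zero z
  have h_form := (contDiff_quadForm (C k)).differentiable one_ne_zero z
  have h_coord := ((EuclideanSpace.proj k : EuclideanSpace ℝ ι →L[ℝ] ℝ).hasFDerivAt.comp z
    h_vec.hasFDerivAt).unique (Complex.reCLM.hasFDerivAt.comp z h_form.hasFDerivAt)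
  exact DFunLike.congr_fun h_coord w

variable [DecidableEq n] [Fintype ι]

lemma HasOrbitGradient.comp_quadFormVec [DecidableEq ι] (hC : ∀ k, (C k).IsHermitian)
    {F : EuclideanSpace ℝ ι → ℝ} (hF : ContDiff ℝ 1 F) :
    HasOrbitGradient (fun z ↦ (F (quadFormVec C z) : ℂ)) fun z ↦
      ∑ k, (fderiv ℝ F (quadFormVec C z) (EuclideanSpace.single k 1) : ℂ) • C k where
  contDiff := Complex.ofRealCLM.contDiff.comp (hF.comp contDiff_quadFormVec)
  continuous_gradient := by
    have := hF.continuous_fderiv one_ne_zero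
    fun_prop
  fderiv_mulVec z A hA := by
    have h_lie (k : ι) : ((quadForm z ⁅C k, A⁆).re : ℂ) = quadForm z ⁅C k, A⁆ := by
      refine ofReal_re_quadForm ?_ z
      have hA' : Aᴴ = -A := hA
      rw [IsHermitian, Ring.lie_def, conjTranspose_sub, conjTranspose_mul, conjTranspose_mul,
        (hC k).eq, hA']
      noncomm_ring
    have h_comp := Complex.ofRealCLM.hasFDerivAt.comp z
      ((hF.differentiable one_ne_zero (quadFormVec C z)).hasFDerivAt.comp z
        (contDiff_quadFormVec.differentiable one_ne_zero z).hasFDerivAt)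
    have h_apply := DFunLike.congr_fun h_comp.fderiv (A *ᵥ z)
    refine h_apply.trans ?_
    simp only [ContinuousLinearMap.comp_apply, Complex.ofRealCLM_apply,
      apply_eq_sum_mul_apply_single (fderiv ℝ F _) (fderiv ℝ (quadFormVec C) z _),
      fderiv_quadFormVec, fderiv_quadForm_mulVec hA, Complex.ofReal_mul,
      h_lie, sum_lie, smul_lie, map_sum, map_smul, smul_eq_mul, mul_comm (quadForm z _)]

variable {μ : Measure (n → ℂ)} [IsProbabilityMeasure μ]

lemma IsSphereUniform.isSteinKernel (hμ : IsSphereUniform μ) (hC : ∀ k, (C k).IsHermitian)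
    (hC_trace : ∀ k, (C k).trace = 0) : IsSteinKernel μ (quadFormVec C) (quadFormKernel C) := by
  classical
  intro F hF j
  have h_gradient := HasOrbitGradient.comp_quadFormVec hC hF.contDiff
  have h_parts := hμ.card_mul_integral_mul_quadForm h_gradient (C j)
  set N : (n → ℂ) → Matrix n n ℂ := fun z ↦
    ∑ k, (fderiv ℝ F (quadFormVec C z) (EuclideanSpace.single k 1) : ℂ) • C k
  have hN : Continuous N := h_gradient.continuous_gradient
  have h_card : (Fintype.card n : ℝ) ≠ 0 := by exact_mod_cast hμ.card_pos.ne'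
  have h_left (z : n → ℂ) : (F (quadFormVec C z) : ℂ) * quadForm z (C j) =
      ((quadFormVec C z j * F (quadFormVec C z) : ℝ) : ℂ) := by
    simp [quadFormVec, ofReal_re_quadForm (hC j), mul_comm]
  have h_right (z : n → ℂ) : (quadForm z (C j * N z) - quadForm z (C j) * quadForm z (N z)).re =
      Fintype.card n * fderiv ℝ F (quadFormVec C z) (quadFormKernel C z j) := by
    rw [apply_eq_sum_mul_apply_single (fderiv ℝ F _) (quadFormKernel C z j), Finset.mul_sum]
    simp only [N, Finset.mul_sum, Matrix.mul_smul, map_sum, map_smul, smul_eq_mul,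
      ← Finset.sum_sub_distrib, Complex.re_sum]
    refine Finset.sum_congr rfl fun k _ ↦ ?_
    rw [mul_left_comm (quadForm z _), ← mul_sub, Complex.re_ofReal_mul]
    simp only [quadFormKernel]
    field_simp
  simp only [h_left, hC_trace, zero_mul, zero_add, integral_complex_ofReal] at h_parts
  have h_re := congrArg Complex.re h_parts
  rw [← Complex.ofReal_natCast, ← Complex.ofReal_mul, Complex.ofReal_re] at h_re
  refine mul_left_cancel₀ h_card (h_re.trans ?_)
  rw [← integral_const_mul]
  simp only [← h_right]
  exact (integral_re (f := fun z ↦ quadForm z (C j * N z) - quadForm z (C j) * quadForm z (N z))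
    (hμ.integrable_of_continuous (by fun_prop))).symm

end SphereSteinKernel

section Frobenius

open scoped Matrix.Norms.Frobenius

variable {n : Type*} [Fintype n]

lemma frobenius_norm_sq (M : Matrix n n ℂ) : ‖M‖ ^ 2 = ∑ i, ∑ j, ‖M i j‖ ^ 2 := by
  simp only [frobenius_norm_def, Real.rpow_two, ← Real.sqrt_eq_rpow]
  exact Real.sq_sqrt (by positivity)

lemma re_trace_mul_conjTranspose (M : Matrix n n ℂ) : (M * Mᴴ).trace.re = ‖M‖ ^ 2 := by
  simp [frobenius_norm_sq, trace, mul_apply, Complex.mul_conj', ← Complex.ofReal_pow]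

lemma norm_trace_mul_le (M N : Matrix n n ℂ) : ‖(M * N).trace‖ ≤ ‖M‖ * ‖N‖ := by
  refine abs_le_of_sq_le_sq' (a := ‖(M * N).trace‖) ?_ (by positivity) |>.2
  rw [mul_pow, ← frobenius_norm_transpose N, frobenius_norm_sq, frobenius_norm_sq,
    ← Fintype.sum_prod_type', ← Fintype.sum_prod_type']
  refine le_trans ?_ (Finset.sum_mul_sq_le_sq_mul_sq _ _ _)
  gcongr
  rw [Fintype.sum_prod_type]
  refine (norm_sum_le _ _).trans (Finset.sum_le_sum fun i _ ↦ ?_)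
  simpa [mul_apply] using norm_sum_le Finset.univ fun j ↦ M i j * N j i

lemma frobenius_norm_mul_sq_le {M N : Matrix n n ℂ} (hM : M.IsHermitian) (hN : N.IsHermitian) :
    ‖M * N‖ ^ 2 ≤ ‖M * M‖ * ‖N * N‖ := by
  have h_cyclic : (M * N * (M * N)ᴴ).trace = (M * M * (N * N)).trace := by
    rw [conjTranspose_mul, hM.eq, hN.eq, ← Matrix.mul_assoc, trace_mul_comm]
    simp only [Matrix.mul_assoc]
  rw [← re_trace_mul_conjTranspose, h_cyclic]
  exact (Complex.re_le_norm _).trans (norm_trace_mul_le _ _)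

lemma trace_mul_self {B : Matrix n n ℂ} (hB : B.IsHermitian) :
    (B * B).trace = ((‖B‖ ^ 2 : ℝ) : ℂ) := by
  refine Complex.ext ?_ ?_
  · rw [Complex.ofReal_re, ← re_trace_mul_conjTranspose, hB.eq]
  · rw [Complex.ofReal_im, ← Complex.conj_eq_iff_im, ← RCLike.star_def, ← trace_conjTranspose,
      conjTranspose_mul, hB.eq]

lemma trace_mul_mul_mul_self {B : Matrix n n ℂ} (hB : B.IsHermitian) :
    (B * B * B * B).trace = ((‖B * B‖ ^ 2 : ℝ) : ℂ) := by
  rw [← trace_mul_self (by rw [IsHermitian, conjTranspose_mul, hB.eq]), Matrix.mul_assoc (B * B)]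

lemma sqrt_re_trace_mul_mul_mul_self {B : Matrix n n ℂ} (hB : B.IsHermitian) :
    √(B * B * B * B).trace.re = ‖B * B‖ := by
  rw [trace_mul_mul_mul_self hB, Complex.ofReal_re, Real.sqrt_sq (norm_nonneg _)]

lemma frobenius_norm_eq_one {B : Matrix n n ℂ} (hB : B.IsHermitian) (hB_sq : (B * B).trace = 1) :
    ‖B‖ = 1 := by
  rw [trace_mul_self hB, ← Complex.ofReal_one, Complex.ofReal_inj] at hB_sq
  exact (pow_eq_one_iff_of_nonneg (norm_nonneg _) two_ne_zero).1 hB_sq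

variable [DecidableEq n]

lemma norm_trace_sq_le (M : Matrix n n ℂ) : ‖M.trace‖ ^ 2 ≤ Fintype.card n * ‖M‖ ^ 2 := by
  have h_one : ‖(1 : Matrix n n ℂ)‖ ^ 2 = Fintype.card n := by
    rw [← re_trace_mul_conjTranspose]
    simp
  rw [← h_one, ← mul_pow, mul_comm]
  gcongr
  simpa using norm_trace_mul_le M 1

lemma frobenius_norm_pow_four_le {B : Matrix n n ℂ} (hB : B.IsHermitian) :
    ‖B‖ ^ 4 ≤ Fintype.card n * ‖B * B‖ ^ 2 := by
  have h_trace := norm_trace_sq_le (B * B)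
  rw [trace_mul_self hB, Complex.norm_real, norm_pow, norm_norm, ← pow_mul] at h_trace
  exact h_trace

lemma frobenius_norm_sq_mul_sq_le {A B : Matrix n n ℂ} (hA : A.IsHermitian) (hB : B.IsHermitian) :
    ‖A‖ ^ 2 * ‖B‖ ^ 2 ≤ Fintype.card n * (‖A * A‖ * ‖B * B‖) := by
  refine le_of_sq_le_sq ?_ (by positivity)
  calc (‖A‖ ^ 2 * ‖B‖ ^ 2) ^ 2 = ‖A‖ ^ 4 * ‖B‖ ^ 4 := by ring
    _ ≤ (Fintype.card n * ‖A * A‖ ^ 2) * (Fintype.card n * ‖B * B‖ ^ 2) := by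
      gcongr
      exacts [frobenius_norm_pow_four_le hA, frobenius_norm_pow_four_le hB]
    _ = (Fintype.card n * (‖A * A‖ * ‖B * B‖)) ^ 2 := by ring

lemma frobenius_norm_mul_le (M N : Matrix n n ℂ) :
    ‖M * N‖ ≤ ‖toEuclideanCLM (n := n) (𝕜 := ℂ) M‖ * ‖N‖ := by
  set L := toEuclideanCLM (n := n) (𝕜 := ℂ) M
  have h_col (k : n) : ∑ i, ‖(M * N) i k‖ ^ 2 ≤ ‖L‖ ^ 2 * ∑ i, ‖N i k‖ ^ 2 := by
    have h_apply : L (WithLp.toLp 2 fun i ↦ N i k) = WithLp.toLp 2 fun i ↦ (M * N) i k := rfl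
    have h_sq := pow_le_pow_left₀ (norm_nonneg _) (L.le_opNorm (WithLp.toLp 2 fun i ↦ N i k)) 2
    rwa [h_apply, mul_pow, EuclideanSpace.norm_sq_eq, EuclideanSpace.norm_sq_eq] at h_sq
  refine le_of_sq_le_sq ?_ (by positivity)
  rw [mul_pow, ← frobenius_norm_transpose, ← frobenius_norm_transpose N, frobenius_norm_sq,
    frobenius_norm_sq, Finset.mul_sum]
  exact Finset.sum_le_sum fun k _ ↦ h_col k

lemma sqrt_re_trace_mul_mul_mul_self_le {B : Matrix n n ℂ} (hB : B.IsHermitian)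
    (hB_sq : (B * B).trace = 1) :
    √(B * B * B * B).trace.re ≤ ‖toEuclideanCLM (n := n) (𝕜 := ℂ) B‖ := by
  rw [sqrt_re_trace_mul_mul_mul_self hB]
  refine (frobenius_norm_mul_le B B).trans_eq ?_
  rw [frobenius_norm_eq_one hB hB_sq, mul_one]

end Frobenius

section KernelEstimate

open scoped Matrix.Norms.Frobenius

variable {n ι : Type*} [Fintype n]

lemma sq_kernel_sub_trace_le [Nonempty n] {A B : Matrix n n ℂ} (hA : A.IsHermitian)
    (hB : B.IsHermitian) (z : n → ℂ) :
    ((Fintype.card n + 1) * (quadForm z (A * B) - quadForm z A * quadForm z B).re -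
        (A * B).trace.re) ^ 2 ≤
      3 * ((Fintype.card n + 1) ^ 2 * ‖quadForm z (A * B) - (A * B).trace / Fintype.card n‖ ^ 2 +
        ((A * B).trace.re / Fintype.card n) ^ 2 +
        (Fintype.card n + 1) ^ 2 * (((quadForm z A).re ^ 4 + (quadForm z B).re ^ 4) / 2)) := by
  set m : ℝ := (Fintype.card n : ℝ)
  set a := (quadForm z A).re
  set b := (quadForm z B).re
  set x := (quadForm z (A * B) - (A * B).trace / Fintype.card n).re with hx
  set t := (A * B).trace.re
  have h_split : (m + 1) * (quadForm z (A * B) - quadForm z A * quadForm z B).re - t =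
      (m + 1) * x + t / m + -((m + 1) * (a * b)) := by
    have h_prod : (quadForm z A * quadForm z B).re = a * b := by
      rw [← ofReal_re_quadForm hA, ← ofReal_re_quadForm hB, ← Complex.ofReal_mul, Complex.ofReal_re]
    rw [Complex.sub_re, h_prod, hx, Complex.sub_re, Complex.div_natCast_re]
    have h_m : m ≠ 0 := Nat.cast_ne_zero.2 Fintype.card_ne_zero
    field_simp
    ring
  have h_x : x ^ 2 ≤ ‖quadForm z (A * B) - (A * B).trace / Fintype.card n‖ ^ 2 := by
    rw [← sq_abs]
    exact pow_le_pow_left₀ (abs_nonneg _) (Complex.abs_re_le_norm _) 2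
  have h_ab : (a * b) ^ 2 ≤ (a ^ 4 + b ^ 4) / 2 := by
    linarith [two_mul_le_add_sq (a ^ 2) (b ^ 2)]
  have h_three (u v w : ℝ) : (u + v + w) ^ 2 ≤ 3 * (u ^ 2 + v ^ 2 + w ^ 2) := by
    linarith [two_mul_le_add_sq u v, two_mul_le_add_sq u w, two_mul_le_add_sq v w]
  rw [h_split]
  refine (h_three _ _ _).trans ?_
  rw [neg_sq, mul_pow, mul_pow _ (a * b)]
  gcongr

variable [DecidableEq n] {μ : Measure (n → ℂ)} [IsProbabilityMeasure μ]

namespace IsSphereUniform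

lemma integral_norm_quadForm_sub_sq_le (hμ : IsSphereUniform μ) (D : Matrix n n ℂ) :
    (Fintype.card n + 1) ^ 2 * ∫ z, ‖quadForm z D - D.trace / Fintype.card n‖ ^ 2 ∂μ ≤
      2 * ‖D‖ ^ 2 := by
  set m : ℝ := (Fintype.card n : ℝ)
  set V := ∫ z, ‖quadForm z D - D.trace / Fintype.card n‖ ^ 2 ∂μ
  have h_m : 1 ≤ m := Nat.one_le_cast.2 hμ.card_pos
  have : 0 ≤ V := integral_nonneg fun z ↦ by positivity
  have h_var : m * (m + 1) * V ≤ ‖D‖ ^ 2 := by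
    rw [hμ.integral_norm_quadForm_sub_sq, re_trace_mul_conjTranspose]
    exact sub_le_self _ (by positivity)
  calc (m + 1) ^ 2 * V ≤ 2 * (m * (m + 1)) * V := by
        gcongr
        nlinarith
    _ ≤ 2 * ‖D‖ ^ 2 := by linarith

lemma integral_re_quadForm_pow_four_le (hμ : IsSphereUniform μ) {B : Matrix n n ℂ}
    (hB : B.IsHermitian) (hB_trace : B.trace = 0) :
    (Fintype.card n + 1) ^ 2 * ∫ z, (quadForm z B).re ^ 4 ∂μ ≤
      9 * ‖B‖ ^ 4 / Fintype.card n ^ 2 := by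
  set m : ℝ := (Fintype.card n : ℝ)
  have h_moment : m * (m + 1) * (m + 2) * (m + 3) * ∫ z, (quadForm z B).re ^ 4 ∂μ =
      3 * (‖B‖ ^ 4 + 2 * ‖B * B‖ ^ 2) := by
    have h_re (z : n → ℂ) : quadForm z B ^ 4 = (((quadForm z B).re ^ 4 : ℝ) : ℂ) := by
      rw [Complex.ofReal_pow, ofReal_re_quadForm hB]
    have h_complex := hμ.integral_quadForm_pow_four hB_trace
    simp only [h_re, integral_complex_ofReal, trace_mul_self hB, trace_mul_mul_mul_self hB,
      ← Complex.ofReal_pow, ← pow_mul, Nat.reduceMul] at h_complex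
    rw [← Complex.ofReal_inj]
    push_cast at h_complex ⊢
    exact h_complex
  have h_mul : ‖B * B‖ ^ 2 ≤ (‖B‖ * ‖B‖) ^ 2 := by
    gcongr
    exact frobenius_norm_mul B B
  have : 0 ≤ ∫ z, (quadForm z B).re ^ 4 ∂μ := integral_nonneg fun z ↦ by positivity
  have h_m : 0 < m := Nat.cast_pos.2 hμ.card_pos
  rw [le_div_iff₀ (by positivity)]
  calc (m + 1) ^ 2 * (∫ z, (quadForm z B).re ^ 4 ∂μ) * m ^ 2
      = (m * (m + 1)) * (m * (m + 1)) * ∫ z, (quadForm z B).re ^ 4 ∂μ := by ring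
    _ ≤ (m * (m + 1)) * ((m + 2) * (m + 3)) * ∫ z, (quadForm z B).re ^ 4 ∂μ := by
        gcongr
        all_goals linarith
    _ = 3 * (‖B‖ ^ 4 + 2 * ‖B * B‖ ^ 2) := by rw [← h_moment]; ring
    _ ≤ 9 * ‖B‖ ^ 4 := by linarith

lemma integral_kernel_sub_trace_sq_le (hμ : IsSphereUniform μ) {A B : Matrix n n ℂ}
    (hA : A.IsHermitian) (hB : B.IsHermitian) (hA_trace : A.trace = 0) (hB_trace : B.trace = 0)
    (hA_norm : ‖A‖ = 1) (hB_norm : ‖B‖ = 1) :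
    ∫ z, ((Fintype.card n + 1) * (quadForm z (A * B) - quadForm z A * quadForm z B).re -
        (A * B).trace.re) ^ 2 ∂μ ≤ 36 * (‖A * A‖ * ‖B * B‖) := by
  set m : ℝ := (Fintype.card n : ℝ)
  have := Fintype.card_pos_iff.1 hμ.card_pos
  set t : ℝ := (A * B).trace.re
  set p : ℝ := ‖A * A‖ * ‖B * B‖
  set V : (n → ℂ) → ℝ := fun z ↦ ‖quadForm z (A * B) - (A * B).trace / Fintype.card n‖ ^ 2
  have h_int {H : (n → ℂ) → ℝ} (hH : Continuous H) : Integrable H μ :=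
    hμ.integrable_of_continuous hH
  have h_m : 1 ≤ m := Nat.one_le_cast.2 hμ.card_pos
  have h_p : 1 ≤ m * p := by
    simpa only [hA_norm, hB_norm, one_pow, mul_one] using frobenius_norm_sq_mul_sq_le hA hB
  have h_t : |t| ≤ 1 := (Complex.abs_re_le_norm _).trans <|
    (norm_trace_mul_le A B).trans_eq (by rw [hA_norm, hB_norm, one_mul])
  have h_inv : 1 / m ^ 2 ≤ p := by
    rw [div_le_iff₀ (by positivity)]
    nlinarith
  have h_var : (m + 1) ^ 2 * ∫ z, V z ∂μ ≤ 2 * p :=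
    (hμ.integral_norm_quadForm_sub_sq_le (A * B)).trans
      (by linarith [frobenius_norm_mul_sq_le hA hB])
  have h_const : (t / m) ^ 2 ≤ p := by
    refine le_trans ?_ h_inv
    rw [div_pow]
    gcongr
    exact (sq_le_one_iff_abs_le_one t).2 h_t
  have h_four {D : Matrix n n ℂ} (hD : D.IsHermitian) (hD_trace : D.trace = 0)
      (hD_norm : ‖D‖ = 1) : (m + 1) ^ 2 * ∫ z, (quadForm z D).re ^ 4 ∂μ ≤ 9 * p := by
    refine (hμ.integral_re_quadForm_pow_four_le hD hD_trace).trans ?_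
    rw [hD_norm, one_pow, mul_div_assoc]
    linarith
  refine (integral_mono (h_int (by fun_prop)) (h_int (by fun_prop))
    (sq_kernel_sub_trace_le hA hB)).trans ?_
  rw [integral_const_mul, integral_add (h_int (by fun_prop)) (h_int (by fun_prop)),
    integral_add (h_int (by fun_prop)) (h_int (by fun_prop)), integral_const_mul,
    integral_const_mul, integral_div, integral_add (h_int (by fun_prop)) (h_int (by fun_prop)),
    integral_const, probReal_univ, one_smul]
  linarith [h_four hA hA_trace hA_norm, h_four hB hB_trace hB_norm]

variable [Fintype ι] [DecidableEq ι] {B : ι → Matrix n n ℂ}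

lemma integral_norm_kernel_sub_single_sq_le (hμ : IsSphereUniform μ)
    (hB : ∀ j, (B j).IsHermitian) (hB_trace : ∀ j, (B j).trace = 0)
    (hB_orth : ∀ j k, (B j * B k).trace = if j = k then 1 else 0) (j : ι) :
    ∫ z, ‖(Fintype.card n * (Fintype.card n + 1) : ℝ) • quadFormKernel B z j -
        EuclideanSpace.single j 1‖ ^ 2 ∂μ ≤ 36 * (‖B j * B j‖ * ∑ k, ‖B k * B k‖) := by
  have := Fintype.card_pos_iff.1 hμ.card_pos
  have h_norm (k : ι) : ‖B k‖ = 1 := frobenius_norm_eq_one (hB k) (by rw [hB_orth, if_pos rfl])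
  have h_coord (z : n → ℂ) :
      ‖(Fintype.card n * (Fintype.card n + 1) : ℝ) • quadFormKernel B z j -
          EuclideanSpace.single j 1‖ ^ 2 =
        ∑ k, ((Fintype.card n + 1) *
          (quadForm z (B j * B k) - quadForm z (B j) * quadForm z (B k)).re -
            (B j * B k).trace.re) ^ 2 := by
    rw [EuclideanSpace.norm_sq_eq]
    refine Finset.sum_congr rfl fun k _ ↦ ?_
    rw [Real.norm_eq_abs, sq_abs, PiLp.sub_apply, PiLp.smul_apply, PiLp.single_apply, hB_orth,
      apply_ite Complex.re, Complex.one_re, Complex.zero_re, smul_eq_mul, quadFormKernel,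
      if_congr eq_comm rfl rfl]
    field_simp
  simp only [h_coord]
  rw [integral_finsetSum _ fun k _ ↦ hμ.integrable_of_continuous (by fun_prop), Finset.mul_sum,
    Finset.mul_sum]
  exact Finset.sum_le_sum fun k _ ↦ hμ.integral_kernel_sub_trace_sq_le (hB j) (hB k) (hB_trace j)
    (hB_trace k) (h_norm j) (h_norm k)

theorem abs_integral_sub_integral_stdGaussian_le (hμ : IsSphereUniform μ)
    (hB : ∀ j, (B j).IsHermitian) (hB_trace : ∀ j, (B j).trace = 0)
    (hB_orth : ∀ j k, (B j * B k).trace = if j = k then 1 else 0)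
    {f : EuclideanSpace ℝ ι → ℝ} (hf : LipschitzWith 1 f) :
    |∫ z, f (√(Fintype.card n * (Fintype.card n + 1)) • quadFormVec B z) ∂μ -
        ∫ y, f y ∂stdGaussian (EuclideanSpace ℝ ι)| ≤
      6 * ∑ j, √(B j * B j * B j * B j).trace.re := by
  simp only [sqrt_re_trace_mul_mul_mul_self (hB _)]
  set r : ℝ := √(Fintype.card n * (Fintype.card n + 1))
  set C : ι → Matrix n n ℂ := fun k ↦ (r : ℂ) • B k
  have hr_sq : r ^ 2 = Fintype.card n * (Fintype.card n + 1) := Real.sq_sqrt (by positivity)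
  have hX : Continuous (quadFormVec C) := continuous_quadFormVec
  have h_stein : IsSteinKernel μ (quadFormVec C) (quadFormKernel C) := by
    refine hμ.isSteinKernel (fun k ↦ ?_) fun k ↦ ?_
    · simp [C, IsHermitian, (hB k).eq]
    · simp [C, hB_trace]
  have h_defect : ∑ j, ∫ z, ‖quadFormKernel C z j - EuclideanSpace.single j 1‖ ^ 2 ∂μ ≤
      (6 * ∑ j, ‖B j * B j‖) ^ 2 := by
    simp only [C, quadFormKernel_ofReal_smul, hr_sq]
    refine (Finset.sum_le_sum fun j _ ↦
      hμ.integral_norm_kernel_sub_single_sq_le hB hB_trace hB_orth j).trans_eq ?_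
    rw [← Finset.mul_sum, ← Finset.sum_mul]
    ring
  simp only [← quadFormVec_ofReal_smul]
  have := μ.isProbabilityMeasure_map hX.aemeasurable
  have h_map {h : EuclideanSpace ℝ ι → ℝ} (hh : LipschitzWith 1 h) :
      ∫ x, h x ∂μ.map (quadFormVec C) = ∫ z, h (quadFormVec C z) ∂μ :=
    integral_map hX.aemeasurable hh.continuous.aestronglyMeasurable
  rw [← h_map hf]
  refine abs_integral_sub_le_of_lipschitzWith ?_ IsGaussian.integrable_id
    (fun h hh hh_supp hh_lip ↦ ?_) hf
  · exact (integrable_map_measure (by fun_prop) hX.aemeasurable).2 (hμ.integrable_of_continuous hX)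
  · rw [h_map hh_lip]
    exact (h_stein.abs_integral_sub_integral_stdGaussian_le (hμ.integrable_of_continuous hX)
      (fun j ↦ hμ.memLp_of_continuous (continuous_quadFormKernel j) 2) hh hh_supp hh_lip).trans
      (Real.sqrt_le_iff.2 ⟨by positivity, h_defect⟩)

end IsSphereUniform

end KernelEstimate

lemma isSphereUniform_map {n Ω : Type*} [Fintype n] [DecidableEq n] [MeasurableSpace Ω]
    {P : Measure Ω} {Z : Ω → n → ℂ} (hZ : Measurable Z)
    (hZ_sphere : ∀ ω, ∑ j, Complex.normSq (Z ω j) = 1)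
    (hZ_inv : ∀ V ∈ unitaryGroup n ℂ, P.map (fun ω ↦ V *ᵥ Z ω) = P.map Z) :
    IsSphereUniform (P.map Z) where
  ae_quadForm_one := by
    refine (ae_map_iff hZ.aemeasurable ?_).2 (ae_of_all _ fun ω ↦ ?_)
    · exact (isClosed_eq (by fun_prop) continuous_const).measurableSet
    · simp [quadForm_apply, dotProduct, ← Complex.normSq_eq_conj_mul_self, ← Complex.ofReal_sum,
        hZ_sphere]
  map_mulVec V hV := by
    rw [Measure.map_map (by fun_prop) hZ]
    exact hZ_inv V hV

section EuclideanCoordinates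

variable {ι : Type*} [Fintype ι]

lemma lipschitzWith_comp_ofLp {f : (ι → ℝ) → ℝ}
    (hf : ∀ x y, |f x - f y| ≤ √(∑ i, (x i - y i) ^ 2)) :
    LipschitzWith 1 fun y : EuclideanSpace ℝ ι ↦ f y.ofLp := by
  refine LipschitzWith.of_dist_le_mul fun x y ↦ ?_
  simpa [EuclideanSpace.dist_eq, Real.dist_eq] using hf x y

lemma integral_comp_ofLp_stdGaussian (f : (ι → ℝ) → ℝ) :
    ∫ y, f y.ofLp ∂stdGaussian (EuclideanSpace ℝ ι) =
      ∫ x, f x ∂Measure.pi fun _ ↦ gaussianReal 0 1 := by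
  rw [← map_pi_eq_stdGaussian]
  exact (MeasurableEquiv.toLp 2 (ι → ℝ)).measurableEmbedding.integral_map _

end EuclideanCoordinates

theorem stmt5 :
    ∃ C : ℝ, 0 < C ∧
      ∀ (n d : ℕ) (Ω : Type u) [MeasurableSpace Ω] (P : Measure Ω)
        [IsProbabilityMeasure P]
        (Z : Ω → Fin n → ℂ) (_ : Measurable Z)
        -- Z takes values in the unit sphere of ℂⁿ:
        (_ : ∀ ω, ∑ j, Complex.normSq (Z ω j) = 1)
        -- the law of Z is invariant under the unitary group (uniform on the sphere):
        (_ : ∀ V ∈ Matrix.unitaryGroup (Fin n) ℂ,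
          Measure.map (fun ω => Matrix.mulVec V (Z ω)) P = Measure.map Z P)
        (B : Fin d → Matrix (Fin n) (Fin n) ℂ)
        (_ : ∀ j, (B j).IsHermitian) (_ : ∀ j, (B j).trace = 0)
        (_ : ∀ j k, ((B j) * (B k)).trace = if j = k then (1 : ℂ) else 0)
        (f : (Fin d → ℝ) → ℝ)
        (_ : ∀ x y : Fin d → ℝ, |f x - f y| ≤ Real.sqrt (∑ i, (x i - y i) ^ 2)),
        |(∫ ω, f (fun j => Real.sqrt ((n : ℝ) * ((n : ℝ) + 1)) *
              (star (Z ω) ⬝ᵥ (B j).mulVec (Z ω)).re) ∂P) -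
            ∫ x, f x ∂(Measure.pi fun _ : Fin d => gaussianReal 0 1)| ≤
          C * ∑ j, Real.sqrt ((((B j) * (B j) * (B j) * (B j)).trace).re) ∧
        |(∫ ω, f (fun j => Real.sqrt ((n : ℝ) * ((n : ℝ) + 1)) *
              (star (Z ω) ⬝ᵥ (B j).mulVec (Z ω)).re) ∂P) -
            ∫ x, f x ∂(Measure.pi fun _ : Fin d => gaussianReal 0 1)| ≤
          C * ∑ j, opNormC (B j) := by
  refine ⟨6, by norm_num, ?_⟩
  intro n d Ω _ P _ Z hZ hZ_sphere hZ_inv B hB hB_trace hB_orth f hf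
  have hμ := isSphereUniform_map hZ hZ_sphere hZ_inv
  have := P.isProbabilityMeasure_map hZ.aemeasurable
  have h_lip := lipschitzWith_comp_ofLp hf
  have hX : Continuous fun z ↦ √(n * (n + 1)) • quadFormVec B z := by fun_prop
  have h_law : ∫ z, f (√(n * (n + 1)) • quadFormVec B z).ofLp ∂P.map Z =
      ∫ ω, f (fun j ↦ √(n * (n + 1)) * (star (Z ω) ⬝ᵥ B j *ᵥ Z ω).re) ∂P :=
    integral_map hZ.aemeasurable (h_lip.continuous.comp hX).aestronglyMeasurable
  have h_bound := hμ.abs_integral_sub_integral_stdGaussian_le hB hB_trace hB_orth h_lip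
  rw [Fintype.card_fin, h_law, integral_comp_ofLp_stdGaussian] at h_bound
  refine ⟨h_bound, h_bound.trans ?_⟩
  gcongr with j
  exact sqrt_re_trace_mul_mul_mul_self_le (hB j) (by rw [hB_orth, if_pos rfl])
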